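/- Let f define a free arrangement of d ≥ 3 lines and one smooth conic in P²(ℂ) all of whose singularities are ordinary of multiplicity < 5. Then mdr(f) ∈ {⌈(d−2)/2⌉, ⌊(d+1)/2⌋}. -/

import Mathlib

open MvPolynomial Finset
open scoped Classical

/-- The Jacobian ideal of `f`. -/
noncomputable def jacobianIdeal (f : MvPolynomial (Fin 3) ℂ) :
    Ideal (MvPolynomial (Fin 3) ℂ) :=
  Ideal.span {pderiv 0 f, pderiv 1 f, pderiv 2 f}

/-- The minimal degree of a nontrivial Jacobian relation of `f`. -/
noncomputable def mdr (f : MvPolynomial (Fin 3) ℂ) : ℕ :=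
  sInf {r : ℕ | ∃ a b c : MvPolynomial (Fin 3) ℂ,
    a.IsHomogeneous r ∧ b.IsHomogeneous r ∧ c.IsHomogeneous r ∧
    ¬(a = 0 ∧ b = 0 ∧ c = 0) ∧
    a * pderiv 0 f + b * pderiv 1 f + c * pderiv 2 f = 0}

namespace CL

open MeasureTheory Topology ENNReal NNReal ComplexConjugate

/-- `F` is real differentiable at `z` with holomorphic (Wirtinger) partial derivatives `w`. -/
def HasW (F : (Fin 3 → ℂ) → ℂ) (w : Fin 3 → ℂ) (z : Fin 3 → ℂ) : Prop :=
  ∃ F' : (Fin 3 → ℂ) →L[ℝ] ℂ, HasFDerivAt F F' z ∧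
    ∀ i, F' (Pi.single i 1) - Complex.I * F' (Pi.single i Complex.I) = 2 * w i

lemma HasW.congr {F : (Fin 3 → ℂ) → ℂ} {w w' z : Fin 3 → ℂ} (h : HasW F w z) (hw : w = w') :
    HasW F w' z := hw ▸ h

lemma HasW.const (c : ℂ) (z : Fin 3 → ℂ) : HasW (fun _ => c) 0 z :=
  ⟨0, hasFDerivAt_const c z, by simp⟩

lemma HasW.add {F G : (Fin 3 → ℂ) → ℂ} {u v z : Fin 3 → ℂ} (hF : HasW F u z) (hG : HasW G v z) :
    HasW (fun z => F z + G z) (u + v) z := by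
  obtain ⟨F', h1, h2⟩ := hF
  obtain ⟨G', h3, h4⟩ := hG
  refine ⟨F' + G', h1.add h3, fun i => ?_⟩
  have := h2 i; have := h4 i
  simp only [add_apply, Pi.add_apply]
  linear_combination h2 i + h4 i

lemma HasW.sub {F G : (Fin 3 → ℂ) → ℂ} {u v z : Fin 3 → ℂ} (hF : HasW F u z) (hG : HasW G v z) :
    HasW (fun z => F z - G z) (u - v) z := by
  obtain ⟨F', h1, h2⟩ := hF
  obtain ⟨G', h3, h4⟩ := hG
  refine ⟨F' - G', h1.sub h3, fun i => ?_⟩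
  have := h2 i; have := h4 i
  simp only [sub_apply, Pi.sub_apply]
  linear_combination h2 i - h4 i

lemma HasW.mul {F G : (Fin 3 → ℂ) → ℂ} {u v z : Fin 3 → ℂ} (hF : HasW F u z) (hG : HasW G v z) :
    HasW (fun z => F z * G z) (F z • v + G z • u) z := by
  obtain ⟨F', h1, h2⟩ := hF
  obtain ⟨G', h3, h4⟩ := hG
  refine ⟨F z • G' + G z • F', h1.mul h3, fun i => ?_⟩
  simp only [add_apply, smul_apply, Pi.add_apply,
    Pi.smul_apply, smul_eq_mul]
  linear_combination G z * h2 i + F z * h4 i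

lemma HasW.coord (i : Fin 3) (z : Fin 3 → ℂ) : HasW (fun z => z i) (Pi.single i 1) z := by
  refine ⟨ContinuousLinearMap.proj i, (ContinuousLinearMap.proj (R := ℝ) (φ := fun _ : Fin 3 => ℂ) i).hasFDerivAt,
    fun j => ?_⟩
  simp only [ContinuousLinearMap.proj_apply]
  by_cases h : i = j
  · subst h; simp; ring
  · simp [Pi.single_eq_of_ne h, Pi.single_eq_of_ne' h]

lemma HasW.conj_coord (i : Fin 3) (z : Fin 3 → ℂ) : HasW (fun z => conj (z i)) 0 z := by
  refine ⟨Complex.conjCLE.toContinuousLinearMap ∘L ContinuousLinearMap.proj i,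
    (Complex.conjCLE.toContinuousLinearMap ∘L
      ContinuousLinearMap.proj (R := ℝ) (φ := fun _ : Fin 3 => ℂ) i).hasFDerivAt,
    fun j => ?_⟩
  simp only [ContinuousLinearMap.comp_apply, ContinuousLinearMap.proj_apply]
  by_cases h : i = j
  · subst h; simp
  · simp [Pi.single_eq_of_ne h]

lemma HasW.poly (P : MvPolynomial (Fin 3) ℂ) (z : Fin 3 → ℂ) :
    HasW (fun z => eval z P) (fun i => eval z (pderiv i P)) z := by
  induction P using MvPolynomial.induction_on with
  | C c => simpa using (HasW.const c z).congr (by ext; simp)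
  | add P Q hP hQ => simpa using (hP.add hQ).congr (by ext; simp)
  | mul_X P j hP =>
    simp only [map_mul, eval_X]
    refine (hP.mul (HasW.coord j z)).congr ?_
    ext i
    simp only [Derivation.leibniz, pderiv_X, Pi.add_apply, Pi.smul_apply, smul_eq_mul, map_add,
      map_mul, eval_X]
    by_cases h : i = j
    · subst h; simp
    · simp [Pi.single_eq_of_ne h, Pi.single_eq_of_ne' h]

lemma HasW.conj_poly (P : MvPolynomial (Fin 3) ℂ) (z : Fin 3 → ℂ) :
    HasW (fun z => conj (eval z P)) 0 z := by
  induction P using MvPolynomial.induction_on with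
  | C c => simpa using (HasW.const (conj c) z)
  | add P Q hP hQ => simpa using (hP.add hQ)
  | mul_X P j hP =>
    simp only [map_mul, eval_X]
    refine (hP.mul (HasW.conj_coord j z)).congr ?_
    simp

lemma HasW.comp_real {N : (Fin 3 → ℂ) → ℝ} {w z : Fin 3 → ℂ} (hN : HasW (fun z => (N z : ℂ)) w z)
    {u : ℝ → ℝ} {u' : ℝ} (hu : HasDerivAt u u' (N z)) :
    HasW (fun z => (u (N z) : ℂ)) ((u' : ℂ) • w) z := by
  obtain ⟨F', h1, h2⟩ := hN
  have hN' : HasFDerivAt N (Complex.reCLM ∘L F') z := by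
    have := Complex.reCLM.hasFDerivAt.comp z h1
    simpa [Function.comp_def] using this
  have hF : F' = Complex.ofRealCLM ∘L (Complex.reCLM ∘L F') := by
    have := Complex.ofRealCLM.hasFDerivAt.comp z hN'
    exact h1.unique this
  have h3 := Complex.ofRealCLM.hasFDerivAt.comp z (hu.comp_hasFDerivAt z hN')
  refine ⟨_, h3, fun i => ?_⟩
  have e1 : ∀ v, F' v = ((F' v).re : ℂ) := fun v => by
    conv_lhs => rw [hF]
    rfl
  have h4 := h2 i
  rw [e1 (Pi.single i 1), e1 (Pi.single i Complex.I)] at h4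
  simp only [ContinuousLinearMap.comp_apply, smul_apply, Pi.smul_apply,
    smul_eq_mul, Complex.ofRealCLM_apply, Complex.reCLM_apply, Complex.ofReal_mul]
  linear_combination (u' : ℂ) * h4

/-- squared Euclidean norm -/
noncomputable def rho (z : Fin 3 → ℂ) : ℝ := ∑ i, Complex.normSq (z i)

lemma rho_cast (z : Fin 3 → ℂ) : (rho z : ℂ) = ∑ i, z i * conj (z i) := by
  simp [rho, Complex.mul_conj]

lemma HasW.rho (z : Fin 3 → ℂ) : HasW (fun z => (rho z : ℂ)) (fun i => conj (z i)) z := by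
  simp only [rho_cast, Fin.sum_univ_three]
  refine ((((HasW.coord 0 z).mul (HasW.conj_coord 0 z)).add
    ((HasW.coord 1 z).mul (HasW.conj_coord 1 z))).add
    ((HasW.coord 2 z).mul (HasW.conj_coord 2 z))).congr ?_
  ext i
  fin_cases i <;> simp

lemma HasW.nsq (f : MvPolynomial (Fin 3) ℂ) (z : Fin 3 → ℂ) :
    HasW (fun z => (Complex.normSq (eval z f) : ℂ))
      (fun i => conj (eval z f) * eval z (pderiv i f)) z := by
  simp only [← Complex.mul_conj]
  refine ((HasW.poly f z).mul (HasW.conj_poly f z)).congr ?_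
  ext i
  simp

lemma integral_fderiv_zero {Y : (Fin 3 → ℂ) → ℂ} (hY : ContDiff ℝ 1 Y) (hc : HasCompactSupport Y)
    (v : Fin 3 → ℂ) : ∫ z, fderiv ℝ Y z v = 0 ∧ Integrable (fun z => fderiv ℝ Y z v) := by
  have hcont : Continuous (fun z => fderiv ℝ Y z v) :=
    (hY.continuous_fderiv (by norm_num)).clm_apply continuous_const
  have hcs : HasCompactSupport (fun z => fderiv ℝ Y z v) := by
    have := hc.fderiv (𝕜 := ℝ)
    exact this.comp_left (g := fun L : (Fin 3 → ℂ) →L[ℝ] ℂ => L v) (by simp)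
  have hint : Integrable (fun z => fderiv ℝ Y z v) := hcont.integrable_of_hasCompactSupport hcs
  refine ⟨?_, hint⟩
  have := integral_mul_fderiv_eq_neg_fderiv_mul_of_integrable (μ := (volume : Measure (Fin 3 → ℂ)))
    (f := fun _ => (1:ℂ)) (g := Y) (v := v) (by simp) (by simpa using hint)
    (by simpa using hY.continuous.integrable_of_hasCompactSupport hc)
    (fun _ _ => differentiableAt_const _) (fun x _ => hY.differentiable (by norm_num) x)
  simpa using this

lemma integral_W_zero {Y : (Fin 3 → ℂ) → ℂ} (hY : ContDiff ℝ 1 Y) (hc : HasCompactSupport Y)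
    {w : (Fin 3 → ℂ) → Fin 3 → ℂ} (hw : ∀ z, HasW Y (w z) z) (i : Fin 3) :
    ∫ z, w z i = 0 ∧ Integrable (fun z => w z i) := by
  have h1 := integral_fderiv_zero hY hc (Pi.single i 1)
  have h2 := integral_fderiv_zero hY hc (Pi.single i Complex.I)
  have e : (fun z => w z i) = fun z => (1/2 : ℂ) * (fderiv ℝ Y z (Pi.single i 1)
      - Complex.I * fderiv ℝ Y z (Pi.single i Complex.I)) := by
    ext z
    obtain ⟨F', h3, h4⟩ := hw z
    rw [h3.fderiv, h4 i]; ring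
  rw [e]
  refine ⟨?_, (h1.2.sub (h2.2.const_mul _)).const_mul _⟩
  rw [integral_const_mul, integral_sub h1.2 (h2.2.const_mul _), integral_const_mul, h1.1, h2.1]
  simp

lemma contDiff_eval (P : MvPolynomial (Fin 3) ℂ) {n : ℕ∞} :
    ContDiff ℝ n (fun z : Fin 3 → ℂ => eval z P) := by
  induction P using MvPolynomial.induction_on with
  | C c => simpa using contDiff_const
  | add P Q hP hQ => simpa using hP.add hQ
  | mul_X P j hP =>
    simp only [map_mul, eval_X]
    exact hP.mul (contDiff_apply ℝ ℂ j)

lemma contDiff_conj {F : (Fin 3 → ℂ) → ℂ} {n : ℕ∞} (hF : ContDiff ℝ n F) :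
    ContDiff ℝ n (fun z => conj (F z)) :=
  Complex.conjCLE.contDiff.comp hF

lemma contDiff_nsq {F : (Fin 3 → ℂ) → ℂ} {n : ℕ∞} (hF : ContDiff ℝ n F) :
    ContDiff ℝ n (fun z => Complex.normSq (F z)) := by
  have : (fun z => Complex.normSq (F z)) = fun z => (F z * conj (F z)).re := by
    ext z; simp [Complex.mul_conj]
  rw [this]
  exact Complex.reCLM.contDiff.comp (hF.mul (contDiff_conj hF))

lemma contDiff_rho {n : ℕ∞} : ContDiff ℝ n rho := by
  unfold rho
  exact ContDiff.sum (fun i _ => contDiff_nsq (contDiff_apply ℝ ℂ i))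

lemma rho_pos {z : Fin 3 → ℂ} (hz : z ≠ 0) : 0 < rho z := by
  obtain ⟨i, hi⟩ := Function.ne_iff.1 hz
  exact Finset.sum_pos' (fun _ _ => Complex.normSq_nonneg _) ⟨i, Finset.mem_univ _,
    Complex.normSq_pos.2 hi⟩

lemma norm_sq_le_rho (z : Fin 3 → ℂ) : ‖z‖ ^ 2 ≤ rho z := by
  have h0 : 0 ≤ rho z := Finset.sum_nonneg (fun _ _ => Complex.normSq_nonneg _)
  rw [← Real.le_sqrt (norm_nonneg _) h0, pi_norm_le_iff_of_nonneg (Real.sqrt_nonneg _)]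
  intro i
  rw [Real.le_sqrt (norm_nonneg _) h0, ← Complex.normSq_eq_norm_sq]
  exact Finset.single_le_sum (f := fun i => Complex.normSq (z i))
    (fun _ _ => Complex.normSq_nonneg _) (Finset.mem_univ i)

end CL

namespace CL

open MeasureTheory Topology ENNReal NNReal

/-- Local finiteness of the integral of `F` at `p`. -/
def LI (F : (Fin 3 → ℂ) → ℝ≥0∞) (p : Fin 3 → ℂ) : Prop :=
  ∃ U ∈ 𝓝 p, ∫⁻ z in U, F z < ∞

lemma LI.mono {F G : (Fin 3 → ℂ) → ℝ≥0∞} {p : Fin 3 → ℂ} (hG : LI G p)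
    (h : ∀ᶠ z in 𝓝 p, F z ≤ G z) : LI F p := by
  obtain ⟨U, hU, hi⟩ := hG
  obtain ⟨W, hW, hWo, hpW⟩ := mem_nhds_iff.1 (Filter.inter_mem hU h)
  refine ⟨W, hWo.mem_nhds hpW, lt_of_le_of_lt ?_ hi⟩
  calc ∫⁻ z in W, F z ≤ ∫⁻ z in W, G z :=
        setLIntegral_mono' hWo.measurableSet (fun z hz => (hW hz).2)
    _ ≤ _ := lintegral_mono_set (fun z hz => (hW hz).1)

lemma LI.add {F G : (Fin 3 → ℂ) → ℝ≥0∞} {p : Fin 3 → ℂ} (hF : LI F p) (hG : LI G p)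
    (hm : Measurable F) : LI (fun z => F z + G z) p := by
  obtain ⟨U, hU, hi⟩ := hF
  obtain ⟨W, hW, hj⟩ := hG
  refine ⟨U ∩ W, Filter.inter_mem hU hW, ?_⟩
  rw [lintegral_add_left hm]
  exact ENNReal.add_lt_top.2 ⟨(lintegral_mono_set Set.inter_subset_left).trans_lt hi,
    (lintegral_mono_set Set.inter_subset_right).trans_lt hj⟩

lemma LI.const_mul {F : (Fin 3 → ℂ) → ℝ≥0∞} {p : Fin 3 → ℂ} (hF : LI F p)
    {c : ℝ≥0∞} (hc : c ≠ ∞) : LI (fun z => c * F z) p := by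
  obtain ⟨U, hU, hi⟩ := hF
  refine ⟨U, hU, ?_⟩
  rw [lintegral_const_mul' _ _ hc]
  exact ENNReal.mul_lt_top hc.lt_top hi

lemma LI.one (p : Fin 3 → ℂ) : LI (fun _ => 1) p := by
  refine ⟨Metric.ball p 1, Metric.ball_mem_nhds p one_pos, ?_⟩
  simp only [lintegral_const, one_mul, Measure.restrict_apply, MeasurableSet.univ, Set.univ_inter]
  exact measure_ball_lt_top

lemma LI.sum {ι : Type*} (s : Finset ι) {F : ι → (Fin 3 → ℂ) → ℝ≥0∞} {p : Fin 3 → ℂ}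
    (hF : ∀ i ∈ s, LI (F i) p) (hm : ∀ i ∈ s, Measurable (F i)) :
    LI (fun z => ∑ i ∈ s, F i z) p := by
  induction s using Finset.induction_on with
  | empty => exact (LI.one p).mono (by simp)
  | insert a s ha ih =>
    simp only [Finset.sum_insert ha]
    exact (hF a (Finset.mem_insert_self _ _)).add
      (ih (fun i hi => hF i (Finset.mem_insert_of_mem hi))
        (fun i hi => hm i (Finset.mem_insert_of_mem hi))) (hm a (Finset.mem_insert_self _ _))

lemma one_dim (κ : ℝ) (hκ0 : 0 ≤ κ) (hκ : κ < 2) (R : ℝ) :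
    ∫⁻ w in Metric.closedBall (0:ℂ) R, (‖w‖ₑ⁻¹) ^ κ < ∞ := by
  have h1 : Integrable (fun x : ℂ => (Set.indicator (Set.Iic R) (fun y : ℝ => y ^ (-κ))) ‖x‖)
      volume := by
    rw [integrable_fun_norm_addHaar volume
      (f := Set.indicator (Set.Iic R) (fun y : ℝ => y ^ (-κ)))]
    simp only [Complex.finrank_real_complex]
    have : IntegrableOn (fun y : ℝ => y ^ (1 - κ)) (Set.Ioc 0 R) volume := by
      rcases le_or_gt R 0 with h | h
      · simp [Set.Ioc_eq_empty (not_lt.2 h)]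
      · have := (intervalIntegral.intervalIntegrable_rpow' (a := 0) (b := R)
          (r := 1 - κ) (by linarith))
        exact (intervalIntegrable_iff_integrableOn_Ioc_of_le h.le).1 this
    have h2 : IntegrableOn (Set.indicator (Set.Iic R) (fun y : ℝ => y ^ (1 - κ))) (Set.Ioi 0)
        volume := by
      rw [← integrable_indicator_iff measurableSet_Ioi, Set.indicator_indicator]
      rw [integrable_indicator_iff (measurableSet_Ioi.inter measurableSet_Iic)]
      exact this
    refine h2.congr_fun ?_ measurableSet_Ioi
    intro y hy
    simp only [Set.indicator]
    split_ifs
    · simp only [Nat.add_one_sub_one, pow_one, smul_eq_mul]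
      rw [sub_eq_add_neg, Real.rpow_add hy, Real.rpow_one]
    · simp
  have h3 := h1.hasFiniteIntegral
  unfold HasFiniteIntegral at h3
  refine lt_of_le_of_lt ?_ h3
  rw [← lintegral_indicator Metric.isClosed_closedBall.measurableSet]
  apply lintegral_mono_ae
  have : ∀ᵐ w : ℂ, w ≠ 0 := by
    simp [ae_iff]
  filter_upwards [this] with w hw
  by_cases h : w ∈ Metric.closedBall (0:ℂ) R
  · have h' : ‖w‖ ∈ Set.Iic R := by simpa using h
    rw [Set.indicator_of_mem h, Set.indicator_of_mem h']
    have hw' : 0 < ‖w‖ := norm_pos_iff.2 hw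
    rw [Real.rpow_neg hw'.le, enorm_inv (by positivity), ENNReal.inv_rpow]
    apply le_of_eq
    congr 1
    rw [Real.enorm_rpow_of_nonneg hw'.le hκ0]
    simp
  · rw [Set.indicator_of_notMem h]; simp

lemma inner_bound (κ : ℝ) (hκ0 : 0 ≤ κ) (c : ℝ) (hc : 0 < c) (η : ℝ)
    (S : Set ℂ) (hS : IsCompact S) (hSη : S ⊆ Metric.closedBall 0 η)
    (g : ℂ → ℂ) (hg : Continuous g) (hlow : ∀ w ∈ S, ∀ w' ∈ S, c * ‖w - w'‖ ≤ ‖g w - g w'‖) :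
    ∫⁻ w in S, (‖g w‖ₑ⁻¹) ^ κ ≤
      ((ENNReal.ofReal (c / 2))⁻¹) ^ κ * ∫⁻ w in Metric.closedBall (0:ℂ) (2 * η), (‖w‖ₑ⁻¹) ^ κ := by
  rcases S.eq_empty_or_nonempty with rfl | hne
  · simp
  obtain ⟨w0, hw0, hmin⟩ := hS.exists_isMinOn hne hg.norm.continuousOn
  have hfin : ((ENNReal.ofReal (c / 2))⁻¹) ^ κ ≠ ∞ := by
    apply ENNReal.rpow_ne_top_of_nonneg hκ0
    simp [hc]
  calc ∫⁻ w in S, (‖g w‖ₑ⁻¹) ^ κ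
      ≤ ∫⁻ w in S, ((ENNReal.ofReal (c / 2))⁻¹) ^ κ * (‖w - w0‖ₑ⁻¹) ^ κ := by
        apply setLIntegral_mono' hS.measurableSet
        intro w hw
        rw [← ENNReal.mul_rpow_of_nonneg _ _ hκ0]
        apply ENNReal.rpow_le_rpow _ hκ0
        rw [← ENNReal.mul_inv (by left; simp [hc]) (by left; simp)]
        apply ENNReal.inv_le_inv.2
        rw [← ofReal_norm (w - w0), ← ENNReal.ofReal_mul (by positivity), ← ofReal_norm (g w)]
        apply ENNReal.ofReal_le_ofReal
        have h1 := hlow w hw w0 hw0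
        have h2 : ‖g w0‖ ≤ ‖g w‖ := hmin hw
        have h3 := norm_sub_le (g w) (g w0)
        linarith
    _ = ((ENNReal.ofReal (c / 2))⁻¹) ^ κ * ∫⁻ w in S, (‖w - w0‖ₑ⁻¹) ^ κ :=
        lintegral_const_mul' _ _ hfin
    _ ≤ _ := by
        apply mul_le_mul' le_rfl
        calc ∫⁻ w in S, (‖w - w0‖ₑ⁻¹) ^ κ
            = ∫⁻ w, S.indicator (fun w => (‖w - w0‖ₑ⁻¹) ^ κ) w :=
              (lintegral_indicator hS.measurableSet _).symm
          _ ≤ ∫⁻ w, (Metric.closedBall (0:ℂ) (2 * η)).indicator (fun w => (‖w‖ₑ⁻¹) ^ κ) (w - w0) := by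
              apply lintegral_mono
              intro w
              beta_reduce
              by_cases h : w ∈ S
              · rw [Set.indicator_of_mem h, Set.indicator_of_mem]
                have h1 := hSη h
                have h2 := hSη hw0
                simp only [Metric.mem_closedBall, dist_zero_right] at h1 h2 ⊢
                linarith [norm_sub_le w w0]
              · rw [Set.indicator_of_notMem h]; simp
          _ = ∫⁻ w, (Metric.closedBall (0:ℂ) (2 * η)).indicator (fun w => (‖w‖ₑ⁻¹) ^ κ) w :=
              lintegral_sub_right_eq_self _ w0
          _ = _ := lintegral_indicator Metric.isClosed_closedBall.measurableSet _

lemma LI.shift (κ : ℝ) (hκ0 : 0 ≤ κ) (hκ : κ < 2) {φ : (Fin 3 → ℂ) → ℂ} (hφ : Continuous φ)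
    {φ' : (Fin 3 → ℂ) →L[ℂ] ℂ} {p e : Fin 3 → ℂ} (hs : HasStrictFDerivAt φ φ' p)
    (he : φ' e ≠ 0) {h : (Fin 3 → ℂ) → ℝ≥0∞} (hm : Measurable h)
    (hinv : ∀ z, ∀ w : ℂ, h (z + w • e) = h z) (hL : LI h p) :
    LI (fun z => (‖φ z‖ₑ⁻¹) ^ κ * h z) p := by
  obtain ⟨U0, hU0, hi⟩ := hL
  have he0 : e ≠ 0 := by rintro rfl; simp at he
  have hepos : 0 < ‖e‖ := norm_pos_iff.2 he0
  have hapos : 0 < ‖φ' e‖ := norm_pos_iff.2 he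
  set ε : ℝ := ‖φ' e‖ / (2 * ‖e‖) with hε
  have hεpos : 0 < ε := by positivity
  have h1 := hs.isLittleO.def hεpos
  rw [nhds_prod_eq] at h1
  obtain ⟨t, ht, h1⟩ := Filter.mem_prod_self_iff.1 h1
  obtain ⟨R, hR, hball⟩ := Metric.nhds_basis_closedBall.mem_iff.1 (Filter.inter_mem hU0 ht)
  set U := Metric.closedBall p (R / 2) with hU
  set U' := Metric.closedBall p R with hU'
  set η : ℝ := R / (2 * ‖e‖) with hη
  have hηpos : 0 < η := by positivity
  have hηe : η * ‖e‖ = R / 2 := by rw [hη]; field_simp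
  set B := Metric.closedBall (0:ℂ) η with hB
  have hUm : MeasurableSet U := Metric.isClosed_closedBall.measurableSet
  have hBm : MeasurableSet B := Metric.isClosed_closedBall.measurableSet
  set c : ℝ := ‖φ' e‖ / 2 with hc
  have hcpos : 0 < c := by positivity
  set K : ℝ≥0∞ := ((ENNReal.ofReal (c / 2))⁻¹) ^ κ *
    ∫⁻ w in Metric.closedBall (0:ℂ) (2 * η), (‖w‖ₑ⁻¹) ^ κ with hK
  have hKfin : K < ∞ := by
    apply ENNReal.mul_lt_top _ (one_dim κ hκ0 hκ _)
    apply ENNReal.rpow_lt_top_of_nonneg hκ0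
    simp [hcpos]
  set g : (Fin 3 → ℂ) → ℝ≥0∞ := fun z => (‖φ z‖ₑ⁻¹) ^ κ with hg
  have hgm : Measurable g := (hφ.measurable.enorm.inv).pow_const κ
  set G : (Fin 3 → ℂ) → ℝ≥0∞ := U.indicator (fun z => g z * h z) with hG
  have hGm : Measurable G := (hgm.mul hm).indicator hUm
  have hlow : ∀ z, ∀ w w' : ℂ, z + w • e ∈ U → z + w' • e ∈ U →
      c * ‖w - w'‖ ≤ ‖φ (z + w • e) - φ (z + w' • e)‖ := by
    intro z w w' hw hw'
    have hUt : U ⊆ t := fun x hx => (hball (Metric.closedBall_subset_closedBall (by linarith) hx)).2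
    have h2 : ‖φ (z + w • e) - φ (z + w' • e) - φ' (z + w • e - (z + w' • e))‖ ≤
        ε * ‖z + w • e - (z + w' • e)‖ := h1 (Set.mk_mem_prod (hUt hw) (hUt hw'))
    have h3 : z + w • e - (z + w' • e) = (w - w') • e := by module
    rw [h3, map_smul, norm_smul, smul_eq_mul] at h2
    have h4 : ε * (‖w - w'‖ * ‖e‖) = c * ‖w - w'‖ := by rw [hε, hc]; field_simp
    rw [h4] at h2
    have h5 : ‖(w - w') * φ' e‖ = 2 * (c * ‖w - w'‖) := by rw [norm_mul, hc]; ring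
    have h6 := norm_sub_norm_le ((w - w') * φ' e) (φ (z + w • e) - φ (z + w' • e))
    rw [norm_sub_rev ((w - w') * φ' e)] at h6
    linarith
  refine ⟨U, Metric.closedBall_mem_nhds p (by linarith), ?_⟩
  have key : volume B * ∫⁻ z in U, g z * h z ≤ K * ∫⁻ z in U', h z := by
    calc volume B * ∫⁻ z in U, g z * h z
        = ∫⁻ w in B, ∫⁻ z, G (z + w • e) := by
          simp_rw [lintegral_add_right_eq_self G]
          rw [lintegral_const, mul_comm, hG, lintegral_indicator hUm]
          simp
      _ = ∫⁻ z, ∫⁻ w in B, G (z + w • e) := by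
          apply lintegral_lintegral_swap
          apply Measurable.aemeasurable
          apply hGm.comp
          fun_prop
      _ ≤ ∫⁻ z, U'.indicator (fun z => K * h z) z := by
          apply lintegral_mono
          intro z
          by_cases hz : z ∈ U'
          · rw [Set.indicator_of_mem hz]
            set S : Set ℂ := B ∩ (fun w : ℂ => z + w • e) ⁻¹' U with hSdef
            have hcont : Continuous (fun w : ℂ => z + w • e) := by fun_prop
            have hSc : IsCompact S :=
              (isCompact_closedBall _ _).inter_right (Metric.isClosed_closedBall.preimage hcont)
            calc ∫⁻ w in B, G (z + w • e)
                = ∫⁻ w in B, ((fun w : ℂ => z + w • e) ⁻¹' U).indicator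
                    (fun w => g (z + w • e) * h z) w := by
                  congr 1
                  ext w
                  by_cases hw : z + w • e ∈ U
                  · rw [hG, Set.indicator_of_mem hw, Set.indicator_of_mem (by exact hw), hinv]
                  · rw [hG, Set.indicator_of_notMem hw, Set.indicator_of_notMem (by exact hw)]
              _ = ∫⁻ w in S, g (z + w • e) * h z := by
                  rw [lintegral_indicator (hUm.preimage hcont.measurable),
                    Measure.restrict_restrict (hUm.preimage hcont.measurable), Set.inter_comm]
              _ = (∫⁻ w in S, g (z + w • e)) * h z := by
                  rw [lintegral_mul_const]
                  exact hgm.comp hcont.measurable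
              _ ≤ K * h z := by
                  gcongr
                  exact inner_bound κ hκ0 c hcpos η S hSc Set.inter_subset_left
                    (fun w => φ (z + w • e)) (hφ.comp hcont)
                    (fun w hw w' hw' => hlow z w w' hw.2 hw'.2)
          · rw [Set.indicator_of_notMem hz]
            simp only [nonpos_iff_eq_zero]
            rw [setLIntegral_congr_fun hBm (g := fun _ => 0)]
            · simp
            intro w hw
            apply Set.indicator_of_notMem
            intro hzw
            apply hz
            simp only [hB, hU, hU', Metric.mem_closedBall, dist_zero_right] at hw hzw ⊢
            have h7 : ‖w • e‖ ≤ R / 2 := by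
              rw [norm_smul, ← hηe]
              gcongr
            have h8 : dist z (z + w • e) = ‖w • e‖ := by simp [dist_eq_norm]
            have := dist_triangle z (z + w • e) p
            linarith
      _ = ∫⁻ z in U', K * h z := lintegral_indicator Metric.isClosed_closedBall.measurableSet _
      _ = K * ∫⁻ z in U', h z := lintegral_const_mul' _ _ hKfin.ne
  have hfin2 : K * ∫⁻ z in U', h z < ∞ :=
    ENNReal.mul_lt_top hKfin ((lintegral_mono_set (fun z hz => (hball hz).1)).trans_lt hi)
  have hBpos : volume B ≠ 0 := (Metric.measure_closedBall_pos volume 0 hηpos).ne'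
  exact ENNReal.lt_top_of_mul_ne_top_right (key.trans_lt hfin2).ne hBpos

lemma prod_le_pairs {ι : Type*} (T : Finset ι) (x : ι → ℝ≥0∞) (hx : ∀ i ∈ T, 1 ≤ x i)
    (t κ : ℝ) (ht : 0 ≤ t) (htκ : t ≤ κ) (n : ℕ) (hn : T.card ≤ n) (hnt : n * t ≤ 2 * κ) :
    ∏ i ∈ T, (x i) ^ t ≤ 1 + (∑ i ∈ T, (x i) ^ κ +
      ∑ i ∈ T, ∑ j ∈ T.erase i, (x i) ^ κ * (x j) ^ κ) := by
  have hκ : 0 ≤ κ := ht.trans htκ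
  rcases T.eq_empty_or_nonempty with rfl | hne
  · simp
  obtain ⟨i, hi, hmax⟩ := T.exists_max_image x hne
  rcases (T.erase i).eq_empty_or_nonempty with he | hne2
  · have : T = {i} := by
      rw [← Finset.insert_erase hi, he]; rfl
    rw [this]
    simp only [Finset.prod_singleton, Finset.sum_singleton]
    refine (ENNReal.rpow_le_rpow_of_exponent_le (hx i hi) htκ).trans ?_
    exact le_add_left (le_add_right le_rfl)
  · obtain ⟨j, hj, hmax2⟩ := (T.erase i).exists_max_image x hne2
    have hjT := Finset.mem_of_mem_erase hj
    have hxi := hx i hi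
    have hxj := hx j hjT
    have hji := hmax j hjT
    have step : ∏ i ∈ T, (x i) ^ t ≤ (x i) ^ κ * (x j) ^ κ := by
      rw [← Finset.mul_prod_erase T _ hi]
      have h1 : ∏ k ∈ T.erase i, (x k) ^ t ≤ (x j) ^ (t * ((T.erase i).card : ℝ)) := by
        rw [ENNReal.rpow_mul, ENNReal.rpow_natCast]
        apply Finset.prod_le_pow_card
        intro k hk
        exact ENNReal.rpow_le_rpow (hmax2 k hk) ht
      have hcard : ((T.erase i).card : ℝ) ≤ n - 1 := by
        rw [Finset.card_erase_of_mem hi]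
        have := Finset.card_pos.2 hne
        rw [Nat.cast_sub (by omega)]
        have : (T.card : ℝ) ≤ n := by exact_mod_cast hn
        simpa using this
      have h2 : (x j) ^ (t * ((T.erase i).card : ℝ)) ≤ (x j) ^ ((κ - t) + κ) := by
        apply ENNReal.rpow_le_rpow_of_exponent_le hxj
        nlinarith
      rw [ENNReal.rpow_add_of_nonneg _ _ (by linarith) hκ] at h2
      calc (x i) ^ t * ∏ k ∈ T.erase i, (x k) ^ t
          ≤ (x i) ^ t * ((x j) ^ (κ - t) * (x j) ^ κ) := by
            apply mul_le_mul' le_rfl (h1.trans h2)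
        _ ≤ (x i) ^ t * ((x i) ^ (κ - t) * (x j) ^ κ) := by
            apply mul_le_mul' le_rfl
            apply mul_le_mul' _ le_rfl
            exact ENNReal.rpow_le_rpow hji (by linarith)
        _ = (x i) ^ κ * (x j) ^ κ := by
            rw [← mul_assoc, ← ENNReal.rpow_add_of_nonneg _ _ ht (by linarith)]
            congr 2; ring
    refine step.trans (le_add_left (le_add_left ?_))
    calc (x i) ^ κ * (x j) ^ κ ≤ ∑ j ∈ T.erase i, (x i) ^ κ * (x j) ^ κ :=
          Finset.single_le_sum (f := fun j => (x i) ^ κ * (x j) ^ κ) (fun _ _ => zero_le) hj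
      _ ≤ _ := Finset.single_le_sum
          (f := fun i => ∑ j ∈ T.erase i, (x i) ^ κ * (x j) ^ κ) (fun _ _ => zero_le) hi

lemma LI.prod {ι : Type*} (T : Finset ι) (φ : ι → (Fin 3 → ℂ) → ℂ) (hφ : ∀ i, Continuous (φ i))
    {p : Fin 3 → ℂ} (hp : ∀ i ∈ T, φ i p = 0)
    (t κ : ℝ) (ht : 0 ≤ t) (htκ : t ≤ κ) (n : ℕ) (hn : T.card ≤ n) (hnt : n * t ≤ 2 * κ)
    (h1 : ∀ i ∈ T, LI (fun z => (‖φ i z‖ₑ⁻¹) ^ κ) p)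
    (h2 : ∀ i ∈ T, ∀ j ∈ T, i ≠ j → LI (fun z => (‖φ i z‖ₑ⁻¹) ^ κ * (‖φ j z‖ₑ⁻¹) ^ κ) p) :
    LI (fun z => ∏ i ∈ T, (‖φ i z‖ₑ⁻¹) ^ t) p := by
  have hm : ∀ i, Measurable (fun z => (‖φ i z‖ₑ⁻¹) ^ κ) := fun i =>
    ((hφ i).measurable.enorm.inv).pow_const κ
  have big := (LI.one p).add ((LI.sum T h1 (fun i _ => hm i)).add
    (LI.sum T (fun i hi => LI.sum (T.erase i) (fun j hj => h2 i hi j (Finset.mem_of_mem_erase hj)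
      (Finset.ne_of_mem_erase hj).symm) (fun j _ => (hm i).mul (hm j)))
      (fun i _ => Finset.measurable_fun_sum _ (fun j _ => (hm i).mul (hm j))))
      (Finset.measurable_fun_sum _ (fun i _ => hm i))) measurable_const
  refine big.mono ?_
  have hev : ∀ᶠ z in 𝓝 p, ∀ i ∈ T, ‖φ i z‖ < 1 := by
    rw [Filter.eventually_all_finset]
    intro i hi
    have : ContinuousAt (fun z => ‖φ i z‖) p := (hφ i).norm.continuousAt
    apply this.eventually_lt_const
    simp [hp i hi]
  filter_upwards [hev] with z hz
  refine prod_le_pairs T (fun i => ‖φ i z‖ₑ⁻¹) ?_ t κ ht htκ n hn hnt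
  intro i hi
  rw [ENNReal.one_le_inv, ← ofReal_norm]
  exact ENNReal.ofReal_le_one.2 (hz i hi).le

end CL

namespace CL

open MeasureTheory Topology ENNReal NNReal ComplexConjugate

/-- contraction of the field with the conjugate radial direction -/
noncomputable def TT (a : Fin 3 → MvPolynomial (Fin 3) ℂ) (z : Fin 3 → ℂ) : ℂ :=
  ∑ j, eval z (a j) * conj (z j)

lemma HasW.TT (a : Fin 3 → MvPolynomial (Fin 3) ℂ) (z : Fin 3 → ℂ) :
    HasW (TT a) (fun i => ∑ j, eval z (pderiv i (a j)) * conj (z j)) z := by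
  have : CL.TT a = fun z => eval z (a 0) * conj (z 0) + eval z (a 1) * conj (z 1)
      + eval z (a 2) * conj (z 2) := by
    ext z; simp [CL.TT, Fin.sum_univ_three]
  rw [this]
  refine ((((HasW.poly (a 0) z).mul (HasW.conj_coord 0 z)).add
    ((HasW.poly (a 1) z).mul (HasW.conj_coord 1 z))).add
    ((HasW.poly (a 2) z).mul (HasW.conj_coord 2 z))).congr ?_
  ext i
  simp [Fin.sum_univ_three]
  ring

lemma contDiff_TT (a : Fin 3 → MvPolynomial (Fin 3) ℂ) {n : ℕ∞} : ContDiff ℝ n (TT a) := by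
  unfold TT
  exact ContDiff.sum (fun i _ => (contDiff_eval _).mul (contDiff_conj (contDiff_apply ℝ ℂ i)))

/-- the vector field whose divergence is integrated -/
noncomputable def YY (f δ : MvPolynomial (Fin 3) ℂ) (a : Fin 3 → MvPolynomial (Fin 3) ℂ)
    (c : ℝ → ℝ) (s ε : ℝ) (i : Fin 3) (z : Fin 3 → ℂ) : ℂ :=
  conj (eval z δ) * (((((Complex.normSq (eval z f)) + ε) ^ (-s) : ℝ) : ℂ) *
    ((c (rho z) : ℂ) * ((rho z : ℂ) * eval z (a i) - TT a z * z i)))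

lemma euler_eval {P : MvPolynomial (Fin 3) ℂ} {n : ℕ} (hP : P.IsHomogeneous n) (z : Fin 3 → ℂ) :
    ∑ i, z i * eval z (pderiv i P) = n * eval z P := by
  have := congrArg (eval z) hP.sum_X_mul_pderiv
  simpa using this

lemma YY_div (f : MvPolynomial (Fin 3) ℂ) (a : Fin 3 → MvPolynomial (Fin 3) ℂ) (D n : ℕ)
    (hf : f.IsHomogeneous D) (ha : ∀ i, (a i).IsHomogeneous n)
    (hsyz : ∑ i, a i * pderiv i f = 0) (c : ℝ → ℝ) (hc : ContDiff ℝ 1 c) (s : ℝ)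
    (hs : s * D = n + 2) (ε : ℝ) (hε : 0 < ε) :
    ∃ w : Fin 3 → (Fin 3 → ℂ) → Fin 3 → ℂ,
      (∀ i z, HasW (YY f (∑ i, pderiv i (a i)) a c s ε i) (w i z) z) ∧
      ∀ z, ∑ i, w i z i = conj (eval z (∑ i, pderiv i (a i))) * c (rho z) *
        (((Complex.normSq (eval z f)) + ε) ^ (-s - 1) : ℝ) *
        (((Complex.normSq (eval z f)) + ε) * rho z * eval z (∑ i, pderiv i (a i))
          - (n + 2) * ε * TT a z) := by
  set δ := ∑ i, pderiv i (a i) with hδ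
  have hx : ∀ z, 0 < Complex.normSq (eval z f) + ε := fun z =>
    add_pos_of_nonneg_of_pos (Complex.normSq_nonneg _) hε
  have hA : ∀ z, HasW (fun z => ((((Complex.normSq (eval z f)) + ε) ^ (-s) : ℝ) : ℂ)) _ z := fun z =>
    (HasW.nsq f z).comp_real (u := fun x => (x + ε) ^ (-s)) 
      (((hasDerivAt_id _).add_const ε).rpow_const (p := -s) (Or.inl (hx z).ne'))
  have hC : ∀ z, HasW (fun z => (c (rho z) : ℂ)) _ z := fun z =>
    (HasW.rho z).comp_real (hc.differentiable (by norm_num) (rho z)).hasDerivAt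
  refine ⟨_, fun i z => (HasW.conj_poly δ z).mul ((hA z).mul ((hC z).mul
    (((HasW.rho z).mul (HasW.poly (a i) z)).sub ((HasW.TT a z).mul (HasW.coord i z))))), ?_⟩
  intro z
  have e1 := congrArg (eval z) hsyz
  have e2 := euler_eval hf z
  have e3 := fun j => euler_eval (ha j) z
  have e4 : (s : ℂ) * D = n + 2 := by exact_mod_cast congrArg (fun x : ℝ => (x : ℂ)) hs
  have e5 : ((((Complex.normSq (eval z f)) + ε) ^ (-s) : ℝ) : ℂ) =
      (((Complex.normSq (eval z f)) + ε) ^ (-s - 1) : ℝ) * (Complex.normSq (eval z f) + ε) := by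
    rw [← Complex.ofReal_add, ← Complex.ofReal_mul]
    congr 1
    rw [Real.rpow_sub_one (hx z).ne']
    field_simp [(hx z).ne']
  have e6 : (Complex.normSq (eval z f) : ℂ) = eval z f * conj (eval z f) := (Complex.mul_conj _).symm
  have e7 := rho_cast z
  have e8 : eval z δ = ∑ i, eval z (pderiv i (a i)) := by simp [hδ]
  have e3' := e3
  have e9 : TT a z = ∑ j, eval z (a j) * conj (z j) := rfl
  generalize conj (eval z δ) = cδ
  simp only [Pi.add_apply, Pi.sub_apply, Pi.smul_apply, smul_eq_mul, Pi.zero_apply, id, Fin.sum_univ_three,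
    Pi.single_eq_same, Complex.ofReal_mul, Complex.ofReal_neg, one_mul, e5, map_add, map_mul, map_zero] at e1 e2 e3 e7 e8 e9 ⊢
  generalize ((((Complex.normSq (eval z f)) + ε) ^ (-s - 1) : ℝ) : ℂ) = P
  have t0 := e3 0
  have t1 := e3 1
  have t2 := e3 2
  generalize ((deriv c (rho z) : ℝ) : ℂ) = c'
  generalize (c (rho z) : ℂ) = c0
  generalize TT a z = T at *
  generalize (rho z : ℂ) = ρ at *
  generalize (Complex.normSq (eval z f) : ℂ) = x at *
  generalize eval z δ = δ' at *
  linear_combination (-s * P * c0 * cδ * conj (eval z f) * ρ) * e1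
    + (s * P * c0 * cδ * conj (eval z f) * T) * e2
    + (P * (x + ε) * c' * cδ) * (T * e7 - ρ * e9)
    + (P * (x + ε) * c0 * cδ) * (-e9 - ρ * e8 - conj (z 0) * t0 - conj (z 1) * t1
      - conj (z 2) * t2 + n * e9)
    - (s * P * c0 * cδ * T * D) * e6 + (P * c0 * cδ * T * x) * e4

end CL

namespace CL

open MeasureTheory Topology ENNReal NNReal ComplexConjugate

lemma eval_smul_hom {P : MvPolynomial (Fin 3) ℂ} {n : ℕ} (hP : P.IsHomogeneous n) (c : ℂ)
    (z : Fin 3 → ℂ) : eval (c • z) P = c ^ n * eval z P := by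
  rw [eval_eq', eval_eq', Finset.mul_sum]
  refine Finset.sum_congr rfl fun d hd => ?_
  have h := hP (mem_support_iff.1 hd)
  have h2 : ∑ i, d i = n := by
    rw [← h, Finsupp.weight_apply, Finsupp.sum_fintype _ _ (by simp)]
    simp
  simp only [Pi.smul_apply, smul_eq_mul, mul_pow, Finset.prod_mul_distrib, Finset.prod_pow_eq_pow_sum, h2]
  ring

lemma lintegral_compact {H : (Fin 3 → ℂ) → ℝ≥0∞} {K : Set (Fin 3 → ℂ)} (hK : IsCompact K)
    (h : ∀ p ∈ K, LI H p) : ∫⁻ z in K, H z < ∞ := by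
  refine hK.induction_on (p := fun s => ∫⁻ z in s, H z < ∞) (by simp) ?_ ?_ ?_
  · intro s t hst ht
    exact (lintegral_mono_set hst).trans_lt ht
  · intro s t hs ht
    exact (lintegral_union_le _ _ _).trans_lt (ENNReal.add_lt_top.2 ⟨hs, ht⟩)
  · intro x hx
    obtain ⟨U, hU, hi⟩ := h x hx
    exact ⟨U, mem_nhdsWithin_of_mem_nhds hU, hi⟩

lemma P_bound (w : ℂ) (s ε : ℝ) (hs : 0 < s) (hε : 0 < ε) :
    ‖((((Complex.normSq w) + ε) ^ (-s - 1) : ℝ) : ℂ) * ε‖ₑ ≤ (‖w‖ₑ⁻¹) ^ (2 * s) := by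
  rcases eq_or_ne w 0 with rfl | hw
  · simp [ENNReal.top_rpow_of_pos (show 0 < 2 * s by positivity)]
  have hx : 0 < Complex.normSq w := Complex.normSq_pos.2 hw
  have hnw : 0 < ‖w‖ := norm_pos_iff.2 hw
  rw [← Complex.ofReal_mul]
  have e1 : (‖w‖ₑ⁻¹) ^ (2 * s) = ENNReal.ofReal ((Complex.normSq w) ^ (-s)) := by
    rw [Complex.normSq_eq_norm_sq, ← ofReal_norm, ← ENNReal.ofReal_inv_of_pos hnw,
      ENNReal.ofReal_rpow_of_pos (by positivity)]
    congr 1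
    rw [← Real.rpow_natCast, ← Real.rpow_mul hnw.le, Real.inv_rpow hnw.le, ← Real.rpow_neg hnw.le]
    congr 1; push_cast; ring
  rw [e1, ← ofReal_norm, Complex.norm_real, Real.norm_of_nonneg (by positivity)]
  refine ENNReal.ofReal_le_ofReal ?_
  calc (Complex.normSq w + ε) ^ (-s - 1) * ε ≤ (Complex.normSq w + ε) ^ (-s - 1) * (Complex.normSq w + ε) := by
        gcongr; linarith
    _ = (Complex.normSq w + ε) ^ (-s) := by
        rw [Real.rpow_sub_one (by positivity)]; field_simp
    _ ≤ _ := Real.rpow_le_rpow_of_nonpos hx (by linarith) (by linarith)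

lemma P_lim (w : ℂ) (hw : w ≠ 0) (s : ℝ) (hs : 0 < s) :
    Filter.Tendsto (fun k : ℕ => ((((Complex.normSq w) + 1 / ((k:ℝ) + 1)) ^ (-s - 1) : ℝ) : ℂ) * ((1 / ((k:ℝ) + 1) : ℝ) : ℂ))
      Filter.atTop (𝓝 0) := by
  have hx : 0 < Complex.normSq w := Complex.normSq_pos.2 hw
  have h1 : Filter.Tendsto (fun k : ℕ => 1 / ((k:ℝ) + 1)) Filter.atTop (𝓝 0) :=
    tendsto_one_div_add_atTop_nhds_zero_nat
  have h2 : Filter.Tendsto (fun k : ℕ => (Complex.normSq w + 1 / ((k:ℝ) + 1)) ^ (-s-1) * (1 / ((k:ℝ) + 1)))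
      Filter.atTop (𝓝 ((Complex.normSq w + 0) ^ (-s-1) * 0)) :=
    ((h1.const_add _).rpow_const (Or.inl (by simpa using hx.ne'))).mul h1
  rw [mul_zero] at h2
  have := (Complex.continuous_ofReal.tendsto 0).comp h2
  simpa [Function.comp_def] using this

end CL

namespace CL

open MeasureTheory Topology ENNReal NNReal ComplexConjugate

theorem main_analytic (f : MvPolynomial (Fin 3) ℂ) (a : Fin 3 → MvPolynomial (Fin 3) ℂ) (D n : ℕ)
    (hD : 0 < D) (hf : f.IsHomogeneous D) (ha : ∀ i, (a i).IsHomogeneous n)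
    (hsyz : ∑ i, a i * pderiv i f = 0) (s : ℝ) (hs : s * D = n + 2)
    (hLI : ∀ p : Fin 3 → ℂ, p ≠ 0 → LI (fun z => ‖eval z (∑ i, pderiv i (a i))‖ₑ * ‖TT a z‖ₑ *
      (‖eval z f‖ₑ⁻¹) ^ (2 * s)) p) :
    ∑ i, pderiv i (a i) = 0 := by
  have hs0 : 0 < s := by
    have : 0 < s * D := by rw [hs]; positivity
    exact pos_of_mul_pos_left this (by positivity)
  set δ := ∑ i, pderiv i (a i) with hδ
  let c : ContDiffBump (2:ℝ) := ⟨1/2, 1, by norm_num, by norm_num⟩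
  have hcs : ContDiff ℝ 1 (c : ℝ → ℝ) := c.contDiff
  have hc0 : ∀ z, rho z ∉ Set.Icc (1:ℝ) 3 → c (rho z) = 0 := by
    intro z hz
    refine c.zero_of_le_dist ?_
    rw [Real.dist_eq]
    change (1:ℝ) ≤ _
    by_contra h
    push Not at h
    rw [abs_lt] at h
    exact hz ⟨by linarith, by linarith⟩
  have hball : ∀ z, z ∉ Metric.closedBall (0 : Fin 3 → ℂ) 2 → c (rho z) = 0 := by
    intro z hz
    refine hc0 z fun h => hz ?_
    have := norm_sq_le_rho z
    rw [mem_closedBall_zero_iff]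
    nlinarith [h.2, norm_nonneg z]
  have hcomp : IsCompact (Metric.closedBall (0 : Fin 3 → ℂ) 2) := isCompact_closedBall _ _
  have crho : Continuous rho := (contDiff_rho (n := 0)).continuous
  have cev : ∀ P : MvPolynomial (Fin 3) ℂ, Continuous (fun z : Fin 3 → ℂ => eval z P) := fun P =>
    (contDiff_eval P (n := 0)).continuous
  have cTT : Continuous (TT a) := (contDiff_TT a (n := 0)).continuous
  have ccr : Continuous (fun z => c (rho z)) := hcs.continuous.comp crho
  have cx : ∀ ε : ℝ, 0 < ε → ∀ t : ℝ, Continuous (fun z => (Complex.normSq (eval z f) + ε) ^ t) := by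
    intro ε hε t
    have : Continuous fun z => Complex.normSq (eval z f) + ε :=
      (Complex.continuous_normSq.comp (cev f)).add continuous_const
    exact this.rpow_const (fun z => Or.inl
      (add_pos_of_nonneg_of_pos (Complex.normSq_nonneg _) hε).ne')
  let G : ℝ → (Fin 3 → ℂ) → ℝ := fun ε z =>
    c (rho z) * rho z * Complex.normSq (eval z δ) * (Complex.normSq (eval z f) + ε) ^ (-s)
  let K : ℝ → (Fin 3 → ℂ) → ℂ := fun ε z =>
    (n + 2) * (conj (eval z δ) * c (rho z) * TT a z) *
      (((((Complex.normSq (eval z f)) + ε) ^ (-s - 1) : ℝ) : ℂ) * ε)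
  have rho0 : ∀ z, 0 ≤ rho z := fun z => Finset.sum_nonneg (fun _ _ => Complex.normSq_nonneg _)
  have hG0 : ∀ ε, 0 < ε → ∀ z, 0 ≤ G ε z := fun ε hε z => by
    have := rho0 z
    have := c.nonneg (x := rho z)
    have := Complex.normSq_nonneg (eval z δ)
    have := add_pos_of_nonneg_of_pos (Complex.normSq_nonneg (eval z f)) hε
    positivity
  have hGc : ∀ ε, 0 < ε → Continuous (G ε) := fun ε hε =>
    ((ccr.mul crho).mul (Complex.continuous_normSq.comp (cev δ))).mul (cx ε hε _)
  have hKc : ∀ ε, 0 < ε → Continuous (K ε) := fun ε hε =>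
    (continuous_const.mul (((Complex.continuous_conj.comp (cev δ)).mul
      (Complex.continuous_ofReal.comp ccr)).mul cTT)).mul
      ((Complex.continuous_ofReal.comp (cx ε hε _)).mul continuous_const)
  have hGi : ∀ ε, 0 < ε → Integrable (G ε) := fun ε hε =>
    (hGc ε hε).integrable_of_hasCompactSupport
      (HasCompactSupport.intro hcomp fun z hz => by simp [G, hball z hz])
  have hKi : ∀ ε, 0 < ε → Integrable (K ε) := fun ε hε =>
    (hKc ε hε).integrable_of_hasCompactSupport
      (HasCompactSupport.intro hcomp fun z hz => by simp [K, hball z hz])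
  have hGK : ∀ ε, 0 < ε → ((∫ z, G ε z : ℝ) : ℂ) = ∫ z, K ε z := by
    intro ε hε
    obtain ⟨w, hw1, hw2⟩ := YY_div f a D n hf ha hsyz c hcs s hs ε hε
    have hYd : ∀ i, ContDiff ℝ 1 (YY f δ a c s ε i) := by
      intro i
      have c1 : ContDiff ℝ 1 (fun z => (Complex.normSq (eval z f) + ε) ^ (-s)) :=
        ((contDiff_nsq (contDiff_eval f (n := 1))).add contDiff_const).rpow_const_of_ne fun z =>
          (add_pos_of_nonneg_of_pos (Complex.normSq_nonneg _) hε).ne'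
      have r1 : ContDiff ℝ 1 rho := contDiff_rho (n := 1)
      exact (contDiff_conj (contDiff_eval δ (n := 1))).mul
        ((Complex.ofRealCLM.contDiff.comp c1).mul
        ((Complex.ofRealCLM.contDiff.comp (hcs.comp r1)).mul
        (((Complex.ofRealCLM.contDiff.comp r1).mul (contDiff_eval (a i) (n := 1))).sub
          ((contDiff_TT a (n := 1)).mul (contDiff_apply ℝ ℂ i)))))
    have hYc : ∀ i, HasCompactSupport (YY f δ a c s ε i) := fun i =>
      HasCompactSupport.intro hcomp fun z hz => by simp [YY, hball z hz]
    have key := fun i => integral_W_zero (hYd i) (hYc i) (hw1 i) i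
    have h0 : ∫ z, ∑ i, w i z i = 0 := by
      rw [integral_finsetSum _ (fun i _ => (key i).2)]
      simp [fun i => (key i).1]
    have e : (fun z => ∑ i, w i z i) = fun z => (G ε z : ℂ) - K ε z := by
      ext z
      rw [hw2 z]
      have hx := add_pos_of_nonneg_of_pos (Complex.normSq_nonneg (eval z f)) hε
      have e5 : ((((Complex.normSq (eval z f)) + ε) ^ (-s) : ℝ) : ℂ) =
          (((Complex.normSq (eval z f)) + ε) ^ (-s - 1) : ℝ) * (Complex.normSq (eval z f) + ε) := by
        rw [← Complex.ofReal_add, ← Complex.ofReal_mul]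
        congr 1
        rw [Real.rpow_sub_one hx.ne']
        field_simp [hx.ne']
      simp only [G, K, Complex.ofReal_mul, e5]
      rw [← Complex.mul_conj (eval z δ)]
      ring
    have hGi' : Integrable (fun z => (G ε z : ℂ)) volume := (hGi ε hε).ofReal
    have h9 := integral_sub hGi' (hKi ε hε)
    rw [e] at h0
    rw [h0, integral_complex_ofReal] at h9
    exact (sub_eq_zero.1 h9.symm)
  have hle : ∀ k : ℕ, ∫⁻ z, ENNReal.ofReal (G 1 z) ≤ ∫⁻ z, ‖K (1 / ((k:ℝ) + 1)) z‖ₑ := by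
    intro k
    set ε : ℝ := 1 / ((k:ℝ) + 1) with hεd
    have hε : 0 < ε := by positivity
    have hε1 : ε ≤ 1 := by
      rw [hεd, div_le_one (by positivity)]; linarith [(Nat.cast_nonneg k : (0:ℝ) ≤ k)]
    calc ∫⁻ z, ENNReal.ofReal (G 1 z) ≤ ∫⁻ z, ENNReal.ofReal (G ε z) := by
          refine lintegral_mono fun z => ENNReal.ofReal_le_ofReal ?_
          have h1 := rho0 z
          have h2 := c.nonneg (x := rho z)
          have h3 := Complex.normSq_nonneg (eval z δ)
          refine mul_le_mul_of_nonneg_left ?_ (by positivity)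
          exact Real.rpow_le_rpow_of_nonpos
            (add_pos_of_nonneg_of_pos (Complex.normSq_nonneg (eval z f)) hε) (by linarith) (by linarith)
      _ = ENNReal.ofReal (∫ z, G ε z) :=
          (ofReal_integral_eq_lintegral_ofReal (hGi ε hε) (Filter.Eventually.of_forall (hG0 ε hε))).symm
      _ = ‖((∫ z, G ε z : ℝ) : ℂ)‖ₑ := by
          rw [← ofReal_norm, Complex.norm_real, Real.norm_of_nonneg (integral_nonneg (hG0 ε hε))]
      _ ≤ _ := by rw [hGK ε hε]; exact enorm_integral_le_lintegral_enorm _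
  let H : (Fin 3 → ℂ) → ℝ≥0∞ := fun z => ‖eval z δ‖ₑ * ‖TT a z‖ₑ * (‖eval z f‖ₑ⁻¹) ^ (2 * s)
  let B : (Fin 3 → ℂ) → ℝ≥0∞ := fun z => ‖((n:ℂ) + 2)‖ₑ * ‖(c (rho z) : ℂ)‖ₑ * H z
  have hBm : Measurable B := by
    refine Measurable.mul (Measurable.mul measurable_const
      (Complex.continuous_ofReal.comp ccr).measurable.enorm) ?_
    exact ((cev δ).measurable.enorm.mul cTT.measurable.enorm).mul
      ((cev f).measurable.enorm.inv.pow_const _)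
  have hBfin : ∫⁻ z, B z < ∞ := by
    let S : Set (Fin 3 → ℂ) := rho ⁻¹' Set.Icc 1 3
    have hSc : IsClosed S := isClosed_Icc.preimage crho
    have hSk : IsCompact S := hcomp.of_isClosed_subset hSc (by
      intro z hz
      have := norm_sq_le_rho z
      rw [mem_closedBall_zero_iff]
      nlinarith [hz.2, norm_nonneg z])
    have h1 : ∫⁻ z in S, H z < ∞ := lintegral_compact hSk fun p hp => hLI p (by
      rintro rfl
      have : rho 0 = 0 := by simp [rho]
      have := hp.1
      linarith)
    calc ∫⁻ z, B z ≤ ∫⁻ z, S.indicator (fun z => ‖((n:ℂ) + 2)‖ₑ * H z) z := by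
          refine lintegral_mono fun z => ?_
          by_cases hz : z ∈ S
          · rw [Set.indicator_of_mem hz]
            simp only [B]
            gcongr
            have : ‖(c (rho z) : ℂ)‖ₑ ≤ 1 := by
              rw [← ofReal_norm, Complex.norm_real, Real.norm_of_nonneg c.nonneg]
              simpa using c.le_one
            calc _ ≤ ‖((n:ℂ) + 2)‖ₑ * 1 := by gcongr
              _ = _ := mul_one _
          · simp [B, hc0 z hz]
      _ = ∫⁻ z in S, ‖((n:ℂ) + 2)‖ₑ * H z := lintegral_indicator hSc.measurableSet _
      _ = ‖((n:ℂ) + 2)‖ₑ * ∫⁻ z in S, H z := lintegral_const_mul' _ _ enorm_ne_top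
      _ < ∞ := ENNReal.mul_lt_top enorm_lt_top h1
  have hlim : Filter.Tendsto (fun k : ℕ => ∫⁻ z, ‖K (1 / ((k:ℝ) + 1)) z‖ₑ) Filter.atTop
      (𝓝 (∫⁻ z : Fin 3 → ℂ, 0)) := by
    refine tendsto_lintegral_of_dominated_convergence B
      (fun k => (hKc _ (by positivity)).measurable.enorm) (fun k => Filter.Eventually.of_forall fun z => ?_)
      hBfin.ne ?_
    · have := P_bound (eval z f) s (1 / ((k:ℝ) + 1)) hs0 (by positivity)
      simp only [K, B, H, enorm_mul] at this ⊢
      rw [show ‖conj (eval z δ)‖ₑ = ‖eval z δ‖ₑ by simp [← ofReal_norm]]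
      calc _ ≤ ‖((n:ℂ) + 2)‖ₑ * (‖eval z δ‖ₑ * ‖(c (rho z) : ℂ)‖ₑ * ‖TT a z‖ₑ) *
            (‖eval z f‖ₑ⁻¹) ^ (2 * s) := by gcongr
        _ = _ := by ring
    · filter_upwards [ae_lt_top hBm hBfin.ne] with z hz
      by_cases hfz : eval z f = 0
      · have : eval z δ = 0 ∨ c (rho z) = 0 ∨ TT a z = 0 := by
          by_contra hcon
          push Not at hcon
          have h2 : ((n:ℂ) + 2) ≠ 0 := by exact_mod_cast (by omega : n + 2 ≠ 0)
          have : (c (rho z) : ℂ) ≠ 0 := by exact_mod_cast hcon.2.1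
          simp only [B, H, hfz, enorm_zero, ENNReal.inv_zero,
            ENNReal.top_rpow_of_pos (show 0 < 2 * s by positivity)] at hz
          rw [ENNReal.mul_top, ENNReal.mul_top] at hz
          · simp at hz
          · simp [h2, this]
          · simp [hcon.1, hcon.2.2]
        have : ∀ k : ℕ, K (1 / ((k:ℝ) + 1)) z = 0 := by
          intro k
          rcases this with h | h | h <;> simp [K, h]
        simp only [this, enorm_zero]
        exact tendsto_const_nhds
      · have h1 := (P_lim (eval z f) hfz s hs0).const_mul
          ((n + 2) * (conj (eval z δ) * c (rho z) * TT a z))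
        rw [mul_zero] at h1
        simpa [K] using h1.enorm
  have hz0 : ∫⁻ z, ENNReal.ofReal (G 1 z) = 0 := by
    have := ge_of_tendsto' hlim hle
    simpa using this
  have hGz : ∀ z, G 1 z = 0 := by
    rw [lintegral_eq_zero_iff (hGc 1 one_pos).measurable.ennreal_ofReal] at hz0
    have h1 : G 1 =ᵐ[volume] (fun _ => (0:ℝ)) := by
      filter_upwards [hz0] with z hz
      exact le_antisymm (by simpa using hz) (hG0 1 one_pos z)
    have := ((hGc 1 one_pos).ae_eq_iff_eq volume continuous_const).1 h1
    intro z; exact congrFun this z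
  have hsph : ∀ z, rho z = 2 → eval z δ = 0 := by
    intro z hz
    have h1 := hGz z
    have h2 : c (rho z) = 1 := by
      rw [hz]
      exact c.one_of_mem_closedBall (Metric.mem_closedBall_self c.rIn_pos.le)
    have hx := add_pos_of_nonneg_of_pos (Complex.normSq_nonneg (eval z f)) one_pos
    simp only [G, h2] at h1
    rw [hz] at h1
    have h3 := (Real.rpow_pos_of_pos hx (-s)).ne'
    have : Complex.normSq (eval z δ) = 0 := by
      simpa [h3] using h1
    simpa using this
  have hδh : δ.IsHomogeneous (n - 1) :=
    IsHomogeneous.sum _ _ _ fun i _ => (ha i).pderiv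
  have hall : ∀ z, z ≠ 0 → eval z δ = 0 := by
    intro z hz
    have hr := rho_pos hz
    let l : ℝ := Real.sqrt (2 / rho z)
    have hl : 0 < l := Real.sqrt_pos.2 (by positivity)
    have h1 : rho ((l : ℂ) • z) = 2 := by
      have : rho ((l : ℂ) • z) = l ^ 2 * rho z := by
        simp [rho, Finset.mul_sum, pow_two]
      rw [this, Real.sq_sqrt (by positivity)]
      field_simp
    have h2 := hsph _ h1
    rw [eval_smul_hom hδh] at h2
    have : (l : ℂ) ≠ 0 := by exact_mod_cast hl.ne'
    simpa [this] using h2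
  have : X 0 * δ = 0 := by
    refine MvPolynomial.funext fun z => ?_
    by_cases hz : z = 0
    · simp [hz]
    · simp [hall z hz]
  simpa using this

end CL

namespace CL

open MeasureTheory Topology ENNReal NNReal ComplexConjugate

lemma cont_eval (P : MvPolynomial (Fin 3) ℂ) : Continuous (fun z : Fin 3 → ℂ => eval z P) :=
  (contDiff_eval P (n := 0)).continuous

lemma strict_eval (P : MvPolynomial (Fin 3) ℂ) (p : Fin 3 → ℂ) :
    ∃ φ' : (Fin 3 → ℂ) →L[ℂ] ℂ, HasStrictFDerivAt (fun z => eval z P) φ' p ∧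
      ∀ e, φ' e = ∑ i, e i * eval p (pderiv i P) := by
  induction P using MvPolynomial.induction_on with
  | C c => exact ⟨0, by simpa using hasStrictFDerivAt_const c p, by simp⟩
  | add P Q hP hQ =>
    obtain ⟨a, ha, ha'⟩ := hP
    obtain ⟨b, hb, hb'⟩ := hQ
    have h3 : HasStrictFDerivAt (fun z => eval z P + eval z Q) (a + b) p := ha.add hb
    refine ⟨a + b, by simpa only [map_add] using h3, fun e => ?_⟩
    simp [ha', hb', mul_add, Finset.sum_add_distrib]
  | mul_X P j hP =>
    obtain ⟨a, ha, ha'⟩ := hP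
    have hb := (ContinuousLinearMap.proj (R := ℂ) (φ := fun _ : Fin 3 => ℂ) j).hasStrictFDerivAt (x := p)
    have h3 : HasStrictFDerivAt (fun z => eval z P * z j) (eval p P •
      ContinuousLinearMap.proj (R := ℂ) (φ := fun _ : Fin 3 => ℂ) j + p j • a) p := ha.mul hb
    refine ⟨_, by simpa only [map_mul, eval_X] using h3, fun e => ?_⟩
    simp only [add_apply, smul_apply, ContinuousLinearMap.proj_apply, ha', smul_eq_mul,
      Derivation.leibniz, pderiv_X, map_add, map_mul, eval_X, mul_add, Finset.sum_add_distrib,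
      Finset.mul_sum]
    congr 1
    · rw [Finset.sum_eq_single j]
      · simp; ring
      · intro i _ hij
        simp [Pi.single_eq_of_ne' hij]
      · simp
    · exact Finset.sum_congr rfl fun i _ => by ring

/-- eventually bounded near `p` -/
def EB (F : (Fin 3 → ℂ) → ℝ≥0∞) (p : Fin 3 → ℂ) : Prop :=
  ∃ C : ℝ≥0∞, C ≠ ∞ ∧ ∀ᶠ z in 𝓝 p, F z ≤ C

lemma EB.mul {F G : (Fin 3 → ℂ) → ℝ≥0∞} {p : Fin 3 → ℂ} (hF : EB F p) (hG : EB G p) :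
    EB (fun z => F z * G z) p := by
  obtain ⟨C, hC, h1⟩ := hF
  obtain ⟨B, hB, h2⟩ := hG
  exact ⟨C * B, ENNReal.mul_ne_top hC hB, by
    filter_upwards [h1, h2] with z h1 h2
    gcongr⟩

lemma EB.prod {ι : Type*} (s : Finset ι) {F : ι → (Fin 3 → ℂ) → ℝ≥0∞} {p : Fin 3 → ℂ}
    (h : ∀ i ∈ s, EB (F i) p) : EB (fun z => ∏ i ∈ s, F i z) p := by
  induction s using Finset.induction_on with
  | empty => exact ⟨1, by simp, by simp⟩
  | insert a s ha ih =>
    simp only [Finset.prod_insert ha]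
    exact (h a (Finset.mem_insert_self _ _)).mul (ih fun i hi => h i (Finset.mem_insert_of_mem hi))

lemma EB.of_cont {F : (Fin 3 → ℂ) → ℝ≥0∞} {p : Fin 3 → ℂ} (h : ContinuousAt F p) (hp : F p ≠ ∞) :
    EB F p := by
  refine ⟨F p + 1, by simp [hp], ?_⟩
  have : F p < F p + 1 := ENNReal.lt_add_right hp (by simp)
  exact (h.eventually (gt_mem_nhds this)).mono fun z hz => le_of_lt hz

lemma EB.enorm {φ : (Fin 3 → ℂ) → ℂ} (hφ : Continuous φ) (p : Fin 3 → ℂ) :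
    EB (fun z => ‖φ z‖ₑ) p :=
  EB.of_cont hφ.enorm.continuousAt enorm_ne_top

lemma EB.inv {φ : (Fin 3 → ℂ) → ℂ} (hφ : Continuous φ) {p : Fin 3 → ℂ} (hp : φ p ≠ 0) {t : ℝ} 
    (ht : 0 ≤ t) : EB (fun z => (‖φ z‖ₑ⁻¹) ^ t) p := by
  refine EB.of_cont ?_ (ENNReal.rpow_ne_top_of_nonneg ht (by simp [hp]))
  exact ((ENNReal.continuous_rpow_const.comp (continuous_inv.comp hφ.enorm))).continuousAt

lemma LI.EB_mul {F G : (Fin 3 → ℂ) → ℝ≥0∞} {p : Fin 3 → ℂ} (hF : EB F p) (hG : LI G p) :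
    LI (fun z => F z * G z) p := by
  obtain ⟨C, hC, h⟩ := hF
  exact (hG.const_mul hC).mono (h.mono fun z hz => by gcongr)

lemma inv_prod_rpow {ι : Type*} (s : Finset ι) (φ : ι → ℂ) (t : ℝ) (ht : 0 ≤ t) :
    (‖∏ i ∈ s, φ i‖ₑ⁻¹) ^ t = ∏ i ∈ s, (‖φ i‖ₑ⁻¹) ^ t := by
  induction s using Finset.induction_on with
  | empty => simp
  | insert a s ha ih =>
    rw [Finset.prod_insert ha, Finset.prod_insert ha, enorm_mul,
      ENNReal.mul_inv (Or.inr enorm_ne_top) (Or.inl enorm_ne_top), ENNReal.mul_rpow_of_nonneg _ _ ht, ih]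

/-- `Q'` is invariant in a direction which is transversal to `Q` at `p`. -/
def Tr (Q Q' : MvPolynomial (Fin 3) ℂ) (p : Fin 3 → ℂ) : Prop :=
  ∃ e : Fin 3 → ℂ, (∀ z, ∀ w : ℂ, eval (z + w • e) Q' = eval z Q') ∧
    ∑ i, e i * eval p (pderiv i Q) ≠ 0

lemma LI_single (Q : MvPolynomial (Fin 3) ℂ) (p : Fin 3 → ℂ)
    (h : ∃ e : Fin 3 → ℂ, ∑ i, e i * eval p (pderiv i Q) ≠ 0) (κ : ℝ) (h0 : 0 ≤ κ) (h2 : κ < 2) :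
    LI (fun z => (‖eval z Q‖ₑ⁻¹) ^ κ) p := by
  obtain ⟨e, he⟩ := h
  obtain ⟨φ', hs, hφ⟩ := strict_eval Q p
  have := LI.shift κ h0 h2 (cont_eval Q) hs (e := e) (by rwa [hφ]) (h := fun _ => 1)
    measurable_const (by simp) (LI.one p)
  simpa using this

lemma LI_pair (Q Q' : MvPolynomial (Fin 3) ℂ) (p : Fin 3 → ℂ)
    (h : Tr Q Q' p) (κ : ℝ) (h0 : 0 ≤ κ) (h2 : κ < 2)
    (hQ' : LI (fun z => (‖eval z Q'‖ₑ⁻¹) ^ κ) p) :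
    LI (fun z => (‖eval z Q‖ₑ⁻¹) ^ κ * (‖eval z Q'‖ₑ⁻¹) ^ κ) p := by
  obtain ⟨e, he, he2⟩ := h
  obtain ⟨φ', hs, hφ⟩ := strict_eval Q p
  exact LI.shift κ h0 h2 (cont_eval Q) hs (e := e) (by rwa [hφ])
    ((cont_eval Q').measurable.enorm.inv.pow_const κ) (fun z w => by rw [he]) hQ'

lemma LI_comp {ι : Type*} (Q : ι → MvPolynomial (Fin 3) ℂ) (p : Fin 3 → ℂ) (T : Finset ι)
    (hT : ∀ o ∈ T, eval p (Q o) = 0)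
    (h1 : ∀ o ∈ T, ∃ e : Fin 3 → ℂ, ∑ i, e i * eval p (pderiv i (Q o)) ≠ 0)
    (h2 : ∀ o ∈ T, ∀ o' ∈ T, o ≠ o' → Tr (Q o) (Q o') p ∨ Tr (Q o') (Q o) p)
    (t κ : ℝ) (ht : 0 ≤ t) (htκ : t ≤ κ) (hκ : κ < 2) (n : ℕ) (hn : T.card ≤ n)
    (hnt : n * t ≤ 2 * κ) :
    LI (fun z => ∏ o ∈ T, (‖eval z (Q o)‖ₑ⁻¹) ^ t) p := by
  have h1' : ∀ o ∈ T, LI (fun z => (‖eval z (Q o)‖ₑ⁻¹) ^ κ) p := fun o ho =>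
    LI_single _ _ (h1 o ho) κ (ht.trans htκ) hκ
  refine LI.prod T (fun o z => eval z (Q o)) (fun o => cont_eval _) hT t κ ht htκ n hn hnt h1' ?_
  intro o ho o' ho' hne
  rcases h2 o ho o' ho' hne with h | h
  · exact LI_pair _ _ p h κ (ht.trans htκ) hκ (h1' o' ho')
  · have := LI_pair _ _ p h κ (ht.trans htκ) hκ (h1' o ho)
    simpa only [mul_comm] using this

/-- Reduction to the components through `p`. -/
lemma LI_reduce {ι : Type*} [Fintype ι] (Q : ι → MvPolynomial (Fin 3) ℂ) (p : Fin 3 → ℂ)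
    (t : ℝ) (ht : 0 ≤ t) (F : (Fin 3 → ℂ) → ℝ≥0∞)
    (h : LI (fun z => F z * ∏ o ∈ univ.filter (fun o => eval p (Q o) = 0), (‖eval z (Q o)‖ₑ⁻¹) ^ t) p) :
    LI (fun z => F z * (‖eval z (∏ o, Q o)‖ₑ⁻¹) ^ t) p := by
  have h3 : EB (fun z => ∏ o ∈ univ.filter (fun o => ¬ eval p (Q o) = 0), (‖eval z (Q o)‖ₑ⁻¹) ^ t) p :=
    EB.prod _ fun o ho => EB.inv (cont_eval _) (by simpa using ho) ht
  refine (LI.EB_mul h3 h).mono (Filter.Eventually.of_forall fun z => le_of_eq ?_)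
  rw [map_prod, inv_prod_rpow _ _ _ ht,
    ← Finset.prod_filter_mul_prod_filter_not univ (fun o => eval p (Q o) = 0)]
  ring

end CL

namespace CL

open MeasureTheory Topology ENNReal NNReal ComplexConjugate

lemma par {u p : Fin 3 → ℂ} (hu : u ≠ 0) (h1 : u 0 * p 1 = u 1 * p 0) (h2 : u 0 * p 2 = u 2 * p 0)
    (h3 : u 1 * p 2 = u 2 * p 1) : ∃ c : ℂ, p = c • u := by
  obtain ⟨i, hi⟩ := Function.ne_iff.1 hu
  simp only [Pi.zero_apply] at hi
  refine ⟨p i / u i, ?_⟩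
  ext j
  simp only [Pi.smul_apply, smul_eq_mul]
  rw [div_mul_eq_mul_div, eq_div_iff hi]
  fin_cases i <;> fin_cases j <;> simp
  all_goals first
    | linear_combination h1 | linear_combination h2 | linear_combination h3
    | linear_combination -h1 | linear_combination -h2 | linear_combination -h3

lemma dirs {v g : Fin 3 → ℂ} (hg : g ≠ 0) (h : ∀ c : ℂ, v ≠ c • g) :
    ∃ e : Fin 3 → ℂ, ∑ i, e i * v i = 0 ∧ ∑ i, e i * g i ≠ 0 := by
  by_contra hcon
  push Not at hcon
  have k1 := hcon ![v 1, -v 0, 0] (by simp [Fin.sum_univ_three]; ring)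
  have k2 := hcon ![v 2, 0, -v 0] (by simp [Fin.sum_univ_three]; ring)
  have k3 := hcon ![0, v 2, -v 1] (by simp [Fin.sum_univ_three]; ring)
  simp [Fin.sum_univ_three] at k1 k2 k3
  obtain ⟨c, hc⟩ := par hg (p := v) (by linear_combination k1) (by linear_combination k2)
    (by linear_combination k3)
  exact h c hc

/-- common kernel of two independent forms -/
lemma ker_two {v1 v2 p w : Fin 3 → ℂ} (hv : v1 ≠ 0) (h : ∀ c : ℂ, v2 ≠ c • v1) (hp : p ≠ 0)
    (a1 : ∑ i, v1 i * p i = 0) (a2 : ∑ i, v2 i * p i = 0)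
    (b1 : ∑ i, v1 i * w i = 0) (b2 : ∑ i, v2 i * w i = 0) : ∃ c : ℂ, w = c • p := by
  simp only [Fin.sum_univ_three] at a1 a2 b1 b2
  by_contra hcon
  push Not at hcon
  set u : Fin 3 → ℂ := ![v1 1 * v2 2 - v1 2 * v2 1, v1 2 * v2 0 - v1 0 * v2 2,
    v1 0 * v2 1 - v1 1 * v2 0] with hu
  have u0 : u 0 = v1 1 * v2 2 - v1 2 * v2 1 := rfl
  have u1 : u 1 = v1 2 * v2 0 - v1 0 * v2 2 := rfl
  have u2 : u 2 = v1 0 * v2 1 - v1 1 * v2 0 := rfl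
  have hune : u ≠ 0 := by
    intro h0
    rw [h0] at u0 u1 u2
    simp only [Pi.zero_apply] at u0 u1 u2
    obtain ⟨c, hc⟩ := par hv (p := v2) (by linear_combination -u2) (by linear_combination u1)
      (by linear_combination -u0)
    exact h c hc
  have key : ∀ x : Fin 3 → ℂ, v1 0 * x 0 + v1 1 * x 1 + v1 2 * x 2 = 0 →
      v2 0 * x 0 + v2 1 * x 1 + v2 2 * x 2 = 0 → ∃ c : ℂ, x = c • u := by
    intro x h1 h2
    refine par hune ?_ ?_ ?_ <;> simp only [u0, u1, u2]
    · linear_combination v2 2 * h1 - v1 2 * h2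
    · linear_combination -v2 1 * h1 + v1 1 * h2
    · linear_combination v2 0 * h1 - v1 0 * h2
  obtain ⟨α, hα⟩ := key p a1 a2
  obtain ⟨β, hβ⟩ := key w b1 b2
  have hα0 : α ≠ 0 := by rintro rfl; simp at hα; exact hp hα
  refine hcon (β / α) ?_
  rw [hα, hβ, smul_smul, div_mul_cancel₀ _ hα0]

lemma hom0 {P : MvPolynomial (Fin 3) ℂ} (hP : P.IsHomogeneous 0) (p : Fin 3 → ℂ) :
    P = C (eval p P) := by
  have := (totalDegree_zero_iff_isHomogeneous (Fin 3)).2 hP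
  rw [totalDegree_eq_zero_iff_eq_C] at this
  conv_rhs => rw [this]
  simpa using this

lemma pderiv_lin {P : MvPolynomial (Fin 3) ℂ} (hP : P.IsHomogeneous 1) (i : Fin 3) (p : Fin 3 → ℂ) :
    pderiv i P = C (eval p (pderiv i P)) := hom0 hP.pderiv p

/-- coefficient vector of a linear form -/
noncomputable def cv (P : MvPolynomial (Fin 3) ℂ) : Fin 3 → ℂ := fun i => eval 0 (pderiv i P)

lemma pderiv_cv {P : MvPolynomial (Fin 3) ℂ} (hP : P.IsHomogeneous 1) (i : Fin 3) :
    pderiv i P = C (cv P i) := pderiv_lin hP i 0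

lemma lin_eq {P : MvPolynomial (Fin 3) ℂ} (hP : P.IsHomogeneous 1) :
    P = ∑ i, C (cv P i) * X i := by
  have := hP.sum_X_mul_pderiv
  simp only [pderiv_cv hP, one_smul] at this
  conv_lhs => rw [← this]
  exact Finset.sum_congr rfl fun i _ => mul_comm _ _

lemma eval_lin {P : MvPolynomial (Fin 3) ℂ} (hP : P.IsHomogeneous 1) (z : Fin 3 → ℂ) :
    eval z P = ∑ i, cv P i * z i := by
  conv_lhs => rw [lin_eq hP]
  simp

lemma cv_ne {P : MvPolynomial (Fin 3) ℂ} (hP : P.IsHomogeneous 1) (h : P ≠ 0) : cv P ≠ 0 := by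
  intro h0
  apply h
  rw [lin_eq hP, h0]
  simp

lemma cv_smul_ne {P R : MvPolynomial (Fin 3) ℂ} (hP : P.IsHomogeneous 1) (hR : R.IsHomogeneous 1)
    (h : ∀ c : ℂ, P ≠ c • R) (c : ℂ) : cv P ≠ c • cv R := by
  intro h0
  apply h c
  rw [lin_eq hP, h0, lin_eq hR]
  simp [Finset.smul_sum, MvPolynomial.smul_eq_C_mul, mul_assoc]
  simp [← lin_eq hR]

lemma lin_inv {P : MvPolynomial (Fin 3) ℂ} (hP : P.IsHomogeneous 1) {e : Fin 3 → ℂ}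
    (he : ∑ i, e i * cv P i = 0) (z : Fin 3 → ℂ) (w : ℂ) :
    eval (z + w • e) P = eval z P := by
  rw [eval_lin hP, eval_lin hP]
  simp only [Pi.add_apply, Pi.smul_apply, smul_eq_mul, mul_add, Finset.sum_add_distrib]
  have : ∑ i, cv P i * (w * e i) = w * ∑ i, e i * cv P i := by
    rw [Finset.mul_sum]; exact Finset.sum_congr rfl fun i _ => by ring
  rw [this, he]; simp

lemma exists_zero (v : Fin 3 → ℂ) : ∃ p : Fin 3 → ℂ, p ≠ 0 ∧ ∑ i, v i * p i = 0 := by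
  by_cases h : v 0 = 0
  · exact ⟨Pi.single 0 1, by simp, by simp [Fin.sum_univ_three, h]⟩
  · refine ⟨![v 1, -v 0, 0], ?_, by simp [Fin.sum_univ_three]; ring⟩
    intro h0
    have := congrFun h0 1
    simp at this
    exact h this

lemma prime_lin {P : MvPolynomial (Fin 3) ℂ} (hP : P.IsHomogeneous 1) (h : P ≠ 0) : Prime P := by
  refine Irreducible.prime ?_
  apply irreducible_of_totalDegree_eq_one (hP.totalDegree h)
  intro x hx
  rw [isUnit_iff_ne_zero]
  rintro rfl
  apply h
  ext m
  simpa using hx m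

end CL

namespace CL

open MeasureTheory Topology ENNReal NNReal ComplexConjugate

/-- the standing hypotheses on the arrangement -/
structure Arr {d : ℕ} (ℓ : Fin d → MvPolynomial (Fin 3) ℂ) (q : MvPolynomial (Fin 3) ℂ) : Prop where
  hom : ∀ i, (ℓ i).IsHomogeneous 1
  ne : ∀ i, ℓ i ≠ 0
  prop : ∀ i j, i ≠ j → ∀ c : ℂ, ℓ i ≠ c • ℓ j
  qhom : q.IsHomogeneous 2
  smooth : ∀ p : Fin 3 → ℂ, (∀ i : Fin 3, eval p (pderiv i q) = 0) → p = 0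
  mult : ∀ p : Fin 3 → ℂ, p ≠ 0 → eval p (q * ∏ i, ℓ i) = 0 →
      ((univ.filter (fun i => eval p (ℓ i) = 0)).card
        + (if eval p q = 0 then 1 else 0)) ≤ 4
  trans : ∀ p : Fin 3 → ℂ, p ≠ 0 → eval p q = 0 →
      ∀ i, eval p (ℓ i) = 0 →
        ∀ c : ℂ, ℓ i ≠ c • (∑ j : Fin 3, C (eval p (pderiv j q)) * X j)

/-- the derivation with coefficients `a` -/
noncomputable def theta (a : Fin 3 → MvPolynomial (Fin 3) ℂ) (P : MvPolynomial (Fin 3) ℂ) :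
    MvPolynomial (Fin 3) ℂ := ∑ m, a m * pderiv m P

lemma theta_mul (a : Fin 3 → MvPolynomial (Fin 3) ℂ) (P R : MvPolynomial (Fin 3) ℂ) :
    theta a (P * R) = P * theta a R + R * theta a P := by
  simp only [theta, Derivation.leibniz, smul_eq_mul, Fin.sum_univ_three]
  ring

lemma theta_prod {d : ℕ} (a : Fin 3 → MvPolynomial (Fin 3) ℂ) (ℓ g : Fin d → MvPolynomial (Fin 3) ℂ)
    (h : ∀ i, theta a (ℓ i) = ℓ i * g i) (s : Finset (Fin d)) :
    theta a (∏ i ∈ s, ℓ i) = (∏ i ∈ s, ℓ i) * ∑ i ∈ s, g i := by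
  induction s using Finset.induction_on with
  | empty => simp [theta]
  | insert x s hx ih =>
    rw [Finset.prod_insert hx, Finset.sum_insert hx, theta_mul, ih, h]
    ring

lemma Arr.cv_ne' {d : ℕ} {ℓ : Fin d → MvPolynomial (Fin 3) ℂ} {q : MvPolynomial (Fin 3) ℂ}
    (A : Arr ℓ q) (i : Fin d) : cv (ℓ i) ≠ 0 := cv_ne (A.hom i) (A.ne i)

lemma Arr.cv_prop {d : ℕ} {ℓ : Fin d → MvPolynomial (Fin 3) ℂ} {q : MvPolynomial (Fin 3) ℂ}
    (A : Arr ℓ q) {i j : Fin d} (h : i ≠ j) (c : ℂ) : cv (ℓ i) ≠ c • cv (ℓ j) :=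
  cv_smul_ne (A.hom i) (A.hom j) (A.prop i j h) c

lemma Arr.cv_grad {d : ℕ} {ℓ : Fin d → MvPolynomial (Fin 3) ℂ} {q : MvPolynomial (Fin 3) ℂ}
    (A : Arr ℓ q) {p : Fin 3 → ℂ} (hp : p ≠ 0) (hq : eval p q = 0) (i : Fin d)
    (hi : eval p (ℓ i) = 0) (c : ℂ) : cv (ℓ i) ≠ c • fun j => eval p (pderiv j q) := by
  intro h
  apply A.trans p hp hq i hi c
  rw [lin_eq (A.hom i), h]
  simp [Finset.smul_sum, MvPolynomial.smul_eq_C_mul, mul_assoc]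

lemma Arr.grad_ne {d : ℕ} {ℓ : Fin d → MvPolynomial (Fin 3) ℂ} {q : MvPolynomial (Fin 3) ℂ}
    (A : Arr ℓ q) {p : Fin 3 → ℂ} (hp : p ≠ 0) : (fun j => eval p (pderiv j q)) ≠ 0 := by
  intro h
  exact hp (A.smooth p fun i => congrFun h i)

lemma Arr.not_dvd {d : ℕ} {ℓ : Fin d → MvPolynomial (Fin 3) ℂ} {q : MvPolynomial (Fin 3) ℂ}
    (A : Arr ℓ q) {i j : Fin d} (h : i ≠ j) : ¬ ℓ i ∣ ℓ j := by
  rintro ⟨k, hk⟩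
  obtain ⟨e, h1, h2⟩ := dirs (A.cv_ne' j) (A.cv_prop h)
  apply h2
  have h3 := congrArg (eval e) hk
  rw [map_mul, eval_lin (A.hom i), eval_lin (A.hom j)] at h3
  simp only [mul_comm (e _)] at h1 ⊢
  rw [h3, h1, zero_mul]

lemma Arr.not_dvd_q {d : ℕ} {ℓ : Fin d → MvPolynomial (Fin 3) ℂ} {q : MvPolynomial (Fin 3) ℂ}
    (A : Arr ℓ q) (i : Fin d) : ¬ ℓ i ∣ q := by
  rintro ⟨k, hk⟩
  obtain ⟨p, hp, h0⟩ := exists_zero (cv (ℓ i))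
  rw [← eval_lin (A.hom i)] at h0
  have hq : eval p q = 0 := by rw [hk]; simp [h0]
  have hg : ∀ j, eval p (pderiv j q) = eval p k * cv (ℓ i) j := by
    intro j
    rw [hk]
    simp [Derivation.leibniz, h0, pderiv_cv (A.hom i)]
  by_cases hk0 : eval p k = 0
  · exact hp (A.smooth p fun j => by rw [hg, hk0, zero_mul])
  · apply A.cv_grad hp hq i h0 (eval p k)⁻¹
    ext j
    simp [hg, hk0]

lemma Arr.exists_g {d : ℕ} {ℓ : Fin d → MvPolynomial (Fin 3) ℂ} {q : MvPolynomial (Fin 3) ℂ}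
    (A : Arr ℓ q) (a : Fin 3 → MvPolynomial (Fin 3) ℂ) (h : theta a (q * ∏ i, ℓ i) = 0) :
    ∃ g : Fin d → MvPolynomial (Fin 3) ℂ, (∀ i, theta a (ℓ i) = ℓ i * g i) ∧
      theta a q = q * (- ∑ i, g i) := by
  have h1 : ∀ i, ℓ i ∣ theta a (ℓ i) := by
    intro i
    have hpr := prime_lin (A.hom i) (A.ne i)
    have e : q * ∏ i, ℓ i = ℓ i * (q * ∏ j ∈ univ.erase i, ℓ j) := by
      rw [← Finset.mul_prod_erase univ ℓ (Finset.mem_univ i)]; ring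
    rw [e, theta_mul] at h
    have h2 : ℓ i ∣ (q * ∏ j ∈ univ.erase i, ℓ j) * theta a (ℓ i) := by
      refine ⟨- theta a (q * ∏ j ∈ univ.erase i, ℓ j), ?_⟩
      linear_combination h
    rcases hpr.dvd_or_dvd h2 with h3 | h3
    · exfalso
      rcases hpr.dvd_or_dvd h3 with h4 | h4
      · exact A.not_dvd_q i h4
      · obtain ⟨j, hj, h5⟩ := (hpr.dvd_finsetProd_iff _).1 h4
        exact A.not_dvd (Finset.ne_of_mem_erase hj).symm h5
    · exact h3
  choose g hg using h1
  refine ⟨g, hg, ?_⟩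
  rw [theta_mul, theta_prod a ℓ g hg] at h
  have hne : ∏ i, ℓ i ≠ 0 := Finset.prod_ne_zero_iff.2 fun i _ => A.ne i
  apply mul_left_cancel₀ hne
  linear_combination h

lemma theta_eval (a : Fin 3 → MvPolynomial (Fin 3) ℂ) {P G : MvPolynomial (Fin 3) ℂ}
    (h : theta a P = P * G) (p : Fin 3 → ℂ) :
    ∑ m, eval p (a m) * eval p (pderiv m P) = eval p P * eval p G := by
  have := congrArg (eval p) h
  simpa [theta] using this

lemma theta_diff (a : Fin 3 → MvPolynomial (Fin 3) ℂ) {P G : MvPolynomial (Fin 3) ℂ}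
    (h : theta a P = P * G) (p : Fin 3 → ℂ) (hp : eval p P = 0) (k : Fin 3) :
    ∑ m, (eval p (pderiv k (a m)) * eval p (pderiv m P)
      + eval p (a m) * eval p (pderiv k (pderiv m P))) = eval p (pderiv k P) * eval p G := by
  have := congrArg (fun R => eval p (pderiv k R)) h
  simp only [theta, map_sum, Derivation.leibniz, smul_eq_mul, map_add, map_mul, hp, zero_mul,
    zero_add] at this
  rw [mul_comm, ← this]
  exact Finset.sum_congr rfl fun m _ => by ring

lemma pderiv_comm' (i j : Fin 3) (P : MvPolynomial (Fin 3) ℂ) :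
    pderiv i (pderiv j P) = pderiv j (pderiv i P) := by
  induction P using MvPolynomial.induction_on with
  | C c => simp
  | add P Q hP hQ => simp [hP, hQ]
  | mul_X P k hP =>
    have hs : ∀ a b : Fin 3, ∃ c : ℂ, (Pi.single a 1 : Fin 3 → MvPolynomial (Fin 3) ℂ) b = C c := by
      intro a b
      by_cases h : b = a
      · subst h; exact ⟨1, by simp⟩
      · exact ⟨0, by simp [Pi.single_eq_of_ne h]⟩
    obtain ⟨c1, h1⟩ := hs i k
    obtain ⟨c2, h2⟩ := hs j k
    simp only [Derivation.leibniz, pderiv_X, smul_eq_mul, map_add, h1, h2, pderiv_C, hP]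
    ring

lemma Arr.eigen {d : ℕ} {ℓ : Fin d → MvPolynomial (Fin 3) ℂ} {q : MvPolynomial (Fin 3) ℂ}
    (A : Arr ℓ q) (a : Fin 3 → MvPolynomial (Fin 3) ℂ) (r : ℕ) (ha : ∀ i, (a i).IsHomogeneous r)
    (h : theta a (q * ∏ i, ℓ i) = 0) (hdiv : ∑ i, pderiv i (a i) = 0) (hr : 2 * r + 3 ≤ d)
    (p : Fin 3 → ℂ) (hp : p ≠ 0)
    (hcard : (univ.filter (fun i => eval p (ℓ i) = 0)).card
        + (if eval p q = 0 then 1 else 0) = 4) (i1 i2 i3 : Fin d) (h12 : i1 ≠ i2) (h13 : i1 ≠ i3)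
    (h23 : i2 ≠ i3) (p1 : eval p (ℓ i1) = 0) (p2 : eval p (ℓ i2) = 0) (p3 : eval p (ℓ i3) = 0) :
    ∀ j, eval p (a j) = 0 := by
  obtain ⟨g, hg, hgq⟩ := A.exists_g a h
  have vp : ∀ {i}, eval p (ℓ i) = 0 → ∑ j, cv (ℓ i) j * p j = 0 := fun {i} hi => by
    rw [← eval_lin (A.hom i)]; exact hi
  -- first order relation along lines
  have L0 : ∀ i, ∑ m, eval p (a m) * cv (ℓ i) m = eval p (ℓ i) * eval p (g i) := by
    intro i
    have := theta_eval a (hg i) p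
    simpa [pderiv_cv (A.hom i)] using this
  have L1 : ∀ i, eval p (ℓ i) = 0 → ∀ k,
      ∑ m, eval p (pderiv k (a m)) * cv (ℓ i) m = cv (ℓ i) k * eval p (g i) := by
    intro i hi k
    have := theta_diff a (hg i) p hi k
    simpa [pderiv_cv (A.hom i)] using this
  -- kernel of two lines
  have ker : ∀ w : Fin 3 → ℂ, ∑ j, cv (ℓ i1) j * w j = 0 → ∑ j, cv (ℓ i2) j * w j = 0 →
      ∃ c : ℂ, w = c • p := fun w b1 b2 =>
    ker_two (A.cv_ne' i1) (A.cv_prop h12.symm) hp (vp p1) (vp p2) b1 b2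
  obtain ⟨c, hc⟩ := ker (fun m => eval p (a m))
    (by simpa [p1, mul_comm] using L0 i1) (by simpa [p2, mul_comm] using L0 i2)
  have hcm : ∀ m, eval p (a m) = c * p m := fun m => congrFun hc m
  -- dual vectors
  obtain ⟨e1, d12, d11⟩ := dirs (A.cv_ne' i1) (A.cv_prop h12.symm)
  obtain ⟨e2, d21, d22⟩ := dirs (A.cv_ne' i2) (A.cv_prop h12)
  have key : ∀ z : Fin 3 → ℂ, ∑ j, cv (ℓ i3) j * z j =
      (∑ j, cv (ℓ i1) j * z j) / (∑ j, e1 j * cv (ℓ i1) j) * (∑ j, e1 j * cv (ℓ i3) j) +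
      (∑ j, cv (ℓ i2) j * z j) / (∑ j, e2 j * cv (ℓ i2) j) * (∑ j, e2 j * cv (ℓ i3) j) := by
    intro z
    set x := (∑ j, cv (ℓ i1) j * z j) / (∑ j, e1 j * cv (ℓ i1) j) with hx
    set y := (∑ j, cv (ℓ i2) j * z j) / (∑ j, e2 j * cv (ℓ i2) j) with hy
    have hx' : x * (∑ j, e1 j * cv (ℓ i1) j) = ∑ j, cv (ℓ i1) j * z j := div_mul_cancel₀ _ d11
    have hy' : y * (∑ j, e2 j * cv (ℓ i2) j) = ∑ j, cv (ℓ i2) j * z j := div_mul_cancel₀ _ d22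
    obtain ⟨b, hb⟩ := ker (fun j => z j - x * e1 j - y * e2 j)
      (by
        simp only [Fin.sum_univ_three] at hx' d21 ⊢
        linear_combination -hx' - y * d21)
      (by
        simp only [Fin.sum_univ_three] at hy' d12 ⊢
        linear_combination -hy' - x * d12)
    have hb' : ∀ j, z j - x * e1 j - y * e2 j = b * p j := fun j => congrFun hb j
    have p3' := vp p3
    simp only [Fin.sum_univ_three] at p3' ⊢
    linear_combination cv (ℓ i3) 0 * hb' 0 + cv (ℓ i3) 1 * hb' 1 + cv (ℓ i3) 2 * hb' 2 + b * p3'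
  obtain ⟨A1, B1, hAB⟩ : ∃ A1 B1 : ℂ, ∀ j, cv (ℓ i3) j = A1 * cv (ℓ i1) j + B1 * cv (ℓ i2) j := by
    refine ⟨(∑ j, e1 j * cv (ℓ i3) j) / (∑ j, e1 j * cv (ℓ i1) j),
      (∑ j, e2 j * cv (ℓ i3) j) / (∑ j, e2 j * cv (ℓ i2) j), fun j => ?_⟩
    have := key (Pi.single j 1)
    simp only [Pi.single_apply, mul_ite, mul_one, mul_zero, Finset.sum_ite_eq', Finset.mem_univ,
      if_true] at this
    rw [this]; ring
  clear key
  have hA1 : A1 ≠ 0 := by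
    rintro rfl
    apply A.cv_prop h23.symm B1
    ext j
    simpa using hAB j
  have hB1 : B1 ≠ 0 := by
    rintro rfl
    apply A.cv_prop h13.symm A1
    ext j
    simpa using hAB j
  have hk : ∀ k, A1 * (eval p (g i1) - eval p (g i3)) * cv (ℓ i1) k
      + B1 * (eval p (g i2) - eval p (g i3)) * cv (ℓ i2) k = 0 := by
    intro k
    have l1 := L1 i1 p1 k
    have l2 := L1 i2 p2 k
    have l3 := L1 i3 p3 k
    simp only [hAB, Fin.sum_univ_three] at l1 l2 l3
    linear_combination l3 - A1 * l1 - B1 * l2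
  have g13 : eval p (g i1) = eval p (g i3) := by
    have : A1 * (eval p (g i1) - eval p (g i3)) * (∑ j, e1 j * cv (ℓ i1) j) = 0 := by
      simp only [Fin.sum_univ_three] at d12 ⊢
      linear_combination e1 0 * hk 0 + e1 1 * hk 1 + e1 2 * hk 2
        - B1 * (eval p (g i2) - eval p (g i3)) * d12
    simp only [mul_eq_zero, hA1, d11, false_or, or_false] at this
    exact sub_eq_zero.1 this
  have g23 : eval p (g i2) = eval p (g i3) := by
    have : B1 * (eval p (g i2) - eval p (g i3)) * (∑ j, e2 j * cv (ℓ i2) j) = 0 := by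
      simp only [Fin.sum_univ_three] at d21 ⊢
      linear_combination e2 0 * hk 0 + e2 1 * hk 1 + e2 2 * hk 2
        - A1 * (eval p (g i1) - eval p (g i3)) * d21
    simp only [mul_eq_zero, hB1, d22, false_or, or_false] at this
    exact sub_eq_zero.1 this
  set γ := eval p (g i3) with hγ
  have hcol : ∀ k, ∃ w : ℂ, ∀ m, eval p (pderiv k (a m)) = γ * (Pi.single k 1 : Fin 3 → ℂ) m
      + w * p m := by
    intro k
    have l1 := L1 i1 p1 k
    have l2 := L1 i2 p2 k
    obtain ⟨w, hw⟩ := ker (fun m => eval p (pderiv k (a m)) - γ * (Pi.single k 1 : Fin 3 → ℂ) m)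
      (by
        simp only [mul_sub, Finset.sum_sub_distrib, Pi.single_apply, mul_ite, mul_one, mul_zero,
          Finset.sum_ite_eq', Finset.mem_univ, if_true]
        simp only [mul_comm (cv (ℓ i1) _)] at l1 ⊢
        rw [l1, g13]; ring)
      (by
        simp only [mul_sub, Finset.sum_sub_distrib, Pi.single_apply, mul_ite, mul_one, mul_zero,
          Finset.sum_ite_eq', Finset.mem_univ, if_true]
        simp only [mul_comm (cv (ℓ i2) _)] at l2 ⊢
        rw [l2, g23]; ring)
    refine ⟨w, fun m => ?_⟩
    have := congrFun hw m
    simp only [Pi.smul_apply, smul_eq_mul] at this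
    linear_combination this
  choose w hw using hcol
  have htr : 3 * γ + ∑ k, w k * p k = 0 := by
    have := congrArg (eval p) hdiv
    rw [map_sum, map_zero] at this
    simp only [hw, Pi.single_eq_same, Fin.sum_univ_three] at this ⊢
    linear_combination this
  have heu : ∀ m, (∑ k, w k * p k + γ - r * c) * p m = 0 := by
    intro m
    have := euler_eval (ha m) p
    rw [hcm] at this
    simp only [hw, Fin.sum_univ_three] at this ⊢
    obtain rfl | rfl | rfl : m = 0 ∨ m = 1 ∨ m = 2 := by fin_cases m <;> simp
    all_goals
      simp at this
      linear_combination this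
  obtain ⟨m0, hm0⟩ := Function.ne_iff.1 hp
  have hrc : ∑ k, w k * p k + γ - r * c = 0 := by
    simpa [show p m0 ≠ 0 from hm0] using heu m0
  have hmul : ∀ (v : Fin 3 → ℂ) k, ∑ m, v m * p m = 0 →
      ∑ m, eval p (pderiv k (a m)) * v m = γ * v k := by
    intro v k hv
    simp only [hw, add_mul, Finset.sum_add_distrib, Pi.single_apply, mul_ite, ite_mul, mul_one,
      mul_zero, zero_mul, Finset.sum_ite_eq', Finset.mem_univ, if_true]
    have : ∑ x, w k * p x * v x = w k * ∑ m, v m * p m := by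
      rw [Finset.mul_sum]; exact Finset.sum_congr rfl fun _ _ => by ring
    rw [this, hv]; ring
  have gthru : ∀ i, eval p (ℓ i) = 0 → eval p (g i) = γ := by
    intro i hi
    obtain ⟨k, hk⟩ := Function.ne_iff.1 (A.cv_ne' i)
    have l1 := L1 i hi k
    rw [hmul _ _ (vp hi)] at l1
    exact mul_left_cancel₀ (show cv (ℓ i) k ≠ 0 from hk) (by linear_combination -l1)
  have gnot : ∀ i, ¬ eval p (ℓ i) = 0 → eval p (g i) = c := by
    intro i hi
    have l0 := L0 i
    have : ∑ m, eval p (a m) * cv (ℓ i) m = c * eval p (ℓ i) := by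
      rw [eval_lin (A.hom i), Finset.mul_sum]
      exact Finset.sum_congr rfl fun m _ => by rw [hcm]; ring
    rw [this] at l0
    exact mul_left_cancel₀ hi (by linear_combination -l0)
  have eq_q := euler_eval A.qhom p
  set κ := eval p (-∑ i, g i) with hκ
  have hκq : κ = if eval p q = 0 then γ + c else 2 * c := by
    split_ifs with hq
    · obtain ⟨k, hk⟩ := Function.ne_iff.1 (A.grad_ne hp)
      simp only [Pi.zero_apply] at hk
      have l1 := theta_diff a hgq p hq k
      have l2 := hmul (fun m => eval p (pderiv m q)) k (by
        simp only [hq, mul_zero] at eq_q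
        simpa only [mul_comm] using eq_q)
      have l3 := euler_eval (A.qhom.pderiv (i := k)) p
      have l4 : ∑ m, eval p (a m) * eval p (pderiv k (pderiv m q)) = c * eval p (pderiv k q) := by
        have : ∑ m, eval p (a m) * eval p (pderiv k (pderiv m q)) =
            c * ∑ m, p m * eval p (pderiv m (pderiv k q)) := by
          rw [Finset.mul_sum]
          refine Finset.sum_congr rfl fun m _ => ?_
          rw [hcm, pderiv_comm' k m]; ring
        rw [this, l3]; simp
      rw [Finset.sum_add_distrib, l2, l4] at l1
      exact mul_left_cancel₀ hk (by linear_combination -l1)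
    · have l0 := theta_eval a hgq p
      have : ∑ m, eval p (a m) * eval p (pderiv m q) = c * (2 * eval p q) := by
        have h2 : ((2:ℕ):ℂ) = 2 := by norm_num
        rw [h2] at eq_q
        rw [← eq_q, Finset.mul_sum]
        exact Finset.sum_congr rfl fun m _ => by rw [hcm]; ring
      rw [this] at l0
      exact mul_left_cancel₀ hq (by linear_combination -l0)
  have hsum : ∑ i, eval p (g i) + κ = 0 := by
    rw [hκ]; simp
  have hsum2 : ∑ i, eval p (g i) = ((univ.filter (fun i => eval p (ℓ i) = 0)).card : ℂ) * γ
      + ((d : ℂ) - (univ.filter (fun i => eval p (ℓ i) = 0)).card) * c := by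
    rw [← Finset.sum_filter_add_sum_filter_not univ (fun i => eval p (ℓ i) = 0),
      Finset.sum_congr rfl (g := fun _ => γ) (fun i hi => gthru i (by simpa using hi)),
      Finset.sum_congr rfl (g := fun _ => c) (s₁ := univ.filter (fun i => ¬ eval p (ℓ i) = 0))
        (fun i hi => gnot i (by simpa using hi))]
    have := Finset.card_filter_add_card_filter_not (s := (univ : Finset (Fin d)))
      (fun i => eval p (ℓ i) = 0)
    rw [Finset.card_univ, Fintype.card_fin] at this
    have h3 : (d : ℂ) = (univ.filter (fun i => eval p (ℓ i) = 0)).card +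
      (univ.filter (fun i => ¬ eval p (ℓ i) = 0)).card := by exact_mod_cast this.symm
    simp only [Finset.sum_const, nsmul_eq_mul]
    rw [h3]; ring
  have hfin : 4 * γ + ((d : ℂ) - 2) * c = 0 := by
    rw [hsum2, hκq] at hsum
    by_cases hq : eval p q = 0
    · simp only [hq, if_true] at hcard hsum
      have h3 : (univ.filter (fun i => eval p (ℓ i) = 0)).card = 3 := by omega
      rw [h3] at hsum
      push_cast at hsum
      linear_combination hsum
    · simp only [hq, if_false] at hcard hsum
      have h3 : (univ.filter (fun i => eval p (ℓ i) = 0)).card = 4 := by omega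
      rw [h3] at hsum
      push_cast at hsum
      linear_combination hsum
  have hc0 : ((d : ℂ) - 2 - 2 * r) * c = 0 := by
    linear_combination hfin - 2 * htr + 2 * hrc
  have hne : (d : ℂ) - 2 - 2 * r ≠ 0 := by
    intro h0
    have : (d : ℂ) = (2 + 2 * r : ℕ) := by push_cast; linear_combination h0
    have := Nat.cast_injective this
    omega
  have hc00 : c = 0 := by simpa [hne] using hc0
  intro j
  rw [hcm, hc00, zero_mul]

end CL

namespace CL

open MeasureTheory Topology ENNReal NNReal ComplexConjugate

lemma poly_pi {u v : (Fin 3 → ℂ) → ℂ} (hu : Continuous u) (hv : Continuous v) (e1 e2 : Fin 3 → ℂ)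
    (P : MvPolynomial (Fin 3) ℂ) :
    ∃ b c : (Fin 3 → ℂ) → ℂ, Continuous b ∧ Continuous c ∧
      ∀ z, eval z P = eval (z - u z • e1 - v z • e2) P + u z * b z + v z * c z := by
  induction P using MvPolynomial.induction_on with
  | C c => exact ⟨0, 0, continuous_const, continuous_const, by simp⟩
  | add P Q hP hQ =>
    obtain ⟨b, c, hb, hc, h⟩ := hP
    obtain ⟨b', c', hb', hc', h'⟩ := hQ
    refine ⟨fun z => b z + b' z, fun z => c z + c' z, hb.add hb', hc.add hc', fun z => ?_⟩
    simp only [map_add]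
    rw [h z, h' z]; ring
  | mul_X P j hP =>
    obtain ⟨b, c, hb, hc, h⟩ := hP
    have hc1 : Continuous fun z => eval (z - u z • e1 - v z • e2) P :=
      (cont_eval P).comp ((continuous_id.sub (hu.smul continuous_const)).sub
        (hv.smul continuous_const))
    have hj : Continuous fun z : Fin 3 → ℂ => z j := continuous_apply j
    refine ⟨fun z => eval (z - u z • e1 - v z • e2) P * e1 j + b z * z j,
      fun z => eval (z - u z • e1 - v z • e2) P * e2 j + c z * z j,
      (hc1.mul continuous_const).add (hb.mul hj), (hc1.mul continuous_const).add (hc.mul hj),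
      fun z => ?_⟩
    simp only [map_mul, eval_X, Pi.sub_apply, Pi.smul_apply, smul_eq_mul]
    linear_combination z j * h z

/-- the components -/
noncomputable def Qc {d : ℕ} (ℓ : Fin d → MvPolynomial (Fin 3) ℂ) (q : MvPolynomial (Fin 3) ℂ) :
    Option (Fin d) → MvPolynomial (Fin 3) ℂ := fun o => o.elim q ℓ

lemma Qc_prod {d : ℕ} (ℓ : Fin d → MvPolynomial (Fin 3) ℂ) (q : MvPolynomial (Fin 3) ℂ) :
    q * ∏ i, ℓ i = ∏ o, Qc ℓ q o := by
  rw [Fintype.prod_option]; rfl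

lemma Qc_card {d : ℕ} (ℓ : Fin d → MvPolynomial (Fin 3) ℂ) (q : MvPolynomial (Fin 3) ℂ)
    (p : Fin 3 → ℂ) : (univ.filter (fun o => eval p (Qc ℓ q o) = 0)).card =
      (univ.filter (fun i => eval p (ℓ i) = 0)).card + (if eval p q = 0 then 1 else 0) := by
  rw [Finset.card_filter, Fintype.sum_option, Finset.card_filter, add_comm]
  rfl

section
variable {d : ℕ} {ℓ : Fin d → MvPolynomial (Fin 3) ℂ} {q : MvPolynomial (Fin 3) ℂ}

lemma Arr.card_le (A : Arr ℓ q) {p : Fin 3 → ℂ} (hp : p ≠ 0) :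
    (univ.filter (fun o => eval p (Qc ℓ q o) = 0)).card ≤ 4 := by
  by_cases h : eval p (q * ∏ i, ℓ i) = 0
  · rw [Qc_card]; exact A.mult p hp h
  · rw [Qc_prod, map_prod, Finset.prod_eq_zero_iff] at h
    push Not at h
    rw [Finset.filter_false_of_mem (fun o ho => h o ho)]
    simp

lemma Arr.single (A : Arr ℓ q) {p : Fin 3 → ℂ} (hp : p ≠ 0) (o : Option (Fin d)) :
    ∃ e : Fin 3 → ℂ, ∑ i, e i * eval p (pderiv i (Qc ℓ q o)) ≠ 0 := by
  have : ∃ k, eval p (pderiv k (Qc ℓ q o)) ≠ 0 := by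
    cases o with
    | none => exact Function.ne_iff.1 (A.grad_ne hp)
    | some i =>
      obtain ⟨k, hk⟩ := Function.ne_iff.1 (A.cv_ne' i)
      exact ⟨k, by simpa [Qc, pderiv_cv (A.hom i)] using hk⟩
  obtain ⟨k, hk⟩ := this
  exact ⟨Pi.single k 1, by simpa [Pi.single_apply] using hk⟩

lemma Arr.pair (A : Arr ℓ q) {p : Fin 3 → ℂ} (hp : p ≠ 0) (o o' : Option (Fin d))
    (ho : eval p (Qc ℓ q o) = 0) (ho' : eval p (Qc ℓ q o') = 0) (hne : o ≠ o') :
    Tr (Qc ℓ q o) (Qc ℓ q o') p ∨ Tr (Qc ℓ q o') (Qc ℓ q o) p := by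
  have key : ∀ i, eval p q = 0 → eval p (ℓ i) = 0 → Tr q (ℓ i) p := by
    intro i hq hi
    obtain ⟨e, h1, h2⟩ := dirs (A.grad_ne hp) (A.cv_grad hp hq i hi)
    exact ⟨e, fun z w => lin_inv (A.hom i) h1 z w, h2⟩
  cases o with
  | none =>
    cases o' with
    | none => exact absurd rfl hne
    | some i => exact Or.inl (key i ho ho')
  | some i =>
    cases o' with
    | none => exact Or.inr (key i ho' ho)
    | some j =>
      left
      obtain ⟨e, h1, h2⟩ := dirs (A.cv_ne' i)
        (A.cv_prop (i := j) (j := i) (fun h => hne (by rw [h])))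
      exact ⟨e, fun z w => lin_inv (A.hom j) h1 z w, by
        simpa [Qc, pderiv_cv (A.hom i)] using h2⟩

lemma Arr.LIc (A : Arr ℓ q) {p : Fin 3 → ℂ} (hp : p ≠ 0) (T : Finset (Option (Fin d)))
    (hT : ∀ o ∈ T, eval p (Qc ℓ q o) = 0)
    (t κ : ℝ) (ht : 0 ≤ t) (htκ : t ≤ κ) (hκ : κ < 2) (n : ℕ) (hn : T.card ≤ n)
    (hnt : n * t ≤ 2 * κ) :
    LI (fun z => ∏ o ∈ T, (‖eval z (Qc ℓ q o)‖ₑ⁻¹) ^ t) p :=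
  LI_comp _ p T hT (fun o _ => A.single hp o)
    (fun o ho o' ho' hne => A.pair hp o o' (hT o ho) (hT o' ho') hne) t κ ht htκ hκ n hn hnt

/-- three distinct lines through a quadruple point -/
lemma three_lines (ℓ : Fin d → MvPolynomial (Fin 3) ℂ) (q : MvPolynomial (Fin 3) ℂ) (p : Fin 3 → ℂ)
    (hcard : (univ.filter (fun i => eval p (ℓ i) = 0)).card
        + (if eval p q = 0 then 1 else 0) = 4) : ∃ i1 i2 i3, i1 ≠ i2 ∧ i1 ≠ i3 ∧ i2 ≠ i3 ∧
        eval p (ℓ i1) = 0 ∧ eval p (ℓ i2) = 0 ∧ eval p (ℓ i3) = 0 := by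
  have : 2 < (univ.filter (fun i => eval p (ℓ i) = 0)).card := by split_ifs at hcard <;> omega
  obtain ⟨a, b, c, ha, hb, hc, h1, h2, h3⟩ := Finset.two_lt_card_iff.1 this
  simp only [Finset.mem_filter, Finset.mem_univ, true_and] at ha hb hc
  exact ⟨a, b, c, h1, h2, h3, ha, hb, hc⟩

lemma Arr.vanish (A : Arr ℓ q) {p : Fin 3 → ℂ} (hp : p ≠ 0) {i1 i2 : Fin d} (h12 : i1 ≠ i2)
    (p1 : eval p (ℓ i1) = 0) (p2 : eval p (ℓ i2) = 0) {P : MvPolynomial (Fin 3) ℂ} {r : ℕ}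
    (hP : P.IsHomogeneous r) (h0 : eval p P = 0) :
    ∃ b c : (Fin 3 → ℂ) → ℂ, Continuous b ∧ Continuous c ∧
      ∀ z, eval z P = eval z (ℓ i1) * b z + eval z (ℓ i2) * c z := by
  obtain ⟨e1, d12, d11⟩ := dirs (A.cv_ne' i1) (A.cv_prop h12.symm)
  obtain ⟨e2, d21, d22⟩ := dirs (A.cv_ne' i2) (A.cv_prop h12)
  set α := ∑ j, e1 j * cv (ℓ i1) j with hα
  set β := ∑ j, e2 j * cv (ℓ i2) j with hβ
  obtain ⟨b, c, hb, hc, h⟩ := poly_pi ((cont_eval (ℓ i1)).div_const α)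
    ((cont_eval (ℓ i2)).div_const β) e1 e2 P
  refine ⟨fun z => b z / α, fun z => c z / β, hb.div_const _, hc.div_const _, fun z => ?_⟩
  rw [h z]
  obtain ⟨m, hm⟩ := ker_two (A.cv_ne' i1) (A.cv_prop h12.symm) hp
    (by rw [← eval_lin (A.hom i1)]; exact p1) (by rw [← eval_lin (A.hom i2)]; exact p2)
    (w := z - (eval z (ℓ i1) / α) • e1 - (eval z (ℓ i2) / β) • e2)
    (by
      have hx : eval z (ℓ i1) / α * α = eval z (ℓ i1) := div_mul_cancel₀ _ d11
      have h4 := eval_lin (A.hom i1) z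
      generalize eval z (ℓ i1) / α = x at *
      generalize eval z (ℓ i2) / β = y at *
      rw [hα] at hx
      simp only [Fin.sum_univ_three, Pi.sub_apply, Pi.smul_apply, smul_eq_mul] at hx h4 d21 ⊢
      linear_combination -hx - h4 - y * d21)
    (by
      have hx : eval z (ℓ i2) / β * β = eval z (ℓ i2) := div_mul_cancel₀ _ d22
      have h4 := eval_lin (A.hom i2) z
      generalize eval z (ℓ i1) / α = x at *
      generalize eval z (ℓ i2) / β = y at *
      rw [hβ] at hx
      simp only [Fin.sum_univ_three, Pi.sub_apply, Pi.smul_apply, smul_eq_mul] at hx h4 d12 ⊢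
      linear_combination -hx - h4 - x * d12)
  rw [hm, eval_smul_hom hP, h0]
  ring

lemma bound_two {b c u v : (Fin 3 → ℂ) → ℂ} (hb : Continuous b) (hc : Continuous c)
    (p : Fin 3 → ℂ) : ∃ K : ℝ≥0∞, K ≠ ∞ ∧ ∀ᶠ z in 𝓝 p,
      ‖u z * b z + v z * c z‖ₑ ≤ K * (‖u z‖ₑ + ‖v z‖ₑ) := by
  obtain ⟨B, hB, h1⟩ := EB.enorm hb p
  obtain ⟨C, hC, h2⟩ := EB.enorm hc p
  refine ⟨B + C, by simp [hB, hC], ?_⟩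
  filter_upwards [h1, h2] with z h1 h2
  calc ‖u z * b z + v z * c z‖ₑ ≤ ‖u z * b z‖ₑ + ‖v z * c z‖ₑ := enorm_add_le _ _
    _ = ‖u z‖ₑ * ‖b z‖ₑ + ‖v z‖ₑ * ‖c z‖ₑ := by rw [enorm_mul, enorm_mul]
    _ ≤ ‖u z‖ₑ * (B + C) + ‖v z‖ₑ * (B + C) := by
        gcongr
        · exact h1.trans le_self_add
        · exact h2.trans le_add_self
    _ = _ := by ring

lemma sq_rpow_le {x : ℝ≥0∞} (hx : x ≤ 1) {t : ℝ} (ht : 0 ≤ t) (ht2 : t ≤ 2) :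
    x ^ 2 * (x⁻¹) ^ t ≤ 1 := by
  by_cases h0 : x = 0
  · simp [h0]
  have hxt : x ≠ ∞ := ne_top_of_le_ne_top one_ne_top hx
  have h1 : (1 : ℝ≥0∞) ≤ x⁻¹ := ENNReal.one_le_inv.2 hx
  calc x ^ 2 * (x⁻¹) ^ t ≤ x ^ 2 * (x⁻¹) ^ (2:ℝ) := by
        gcongr
    _ = (x * x⁻¹) ^ 2 := by
        rw [mul_pow]; congr 1
        exact_mod_cast ENNReal.rpow_natCast x⁻¹ 2
    _ = 1 := by rw [ENNReal.mul_inv_cancel h0 hxt]; simp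

lemma sq_add_le (x y : ℝ≥0∞) : (x + y) * (x + y) ≤ 4 * (x ^ 2 + y ^ 2) := by
  rcases le_total x y with h | h
  · calc (x + y) * (x + y) ≤ (y + y) * (y + y) := by gcongr
      _ = 4 * y ^ 2 := by ring
      _ ≤ _ := by gcongr; exact le_add_self
  · calc (x + y) * (x + y) ≤ (x + x) * (x + x) := by gcongr
      _ = 4 * x ^ 2 := by ring
      _ ≤ _ := by gcongr; exact le_self_add

lemma ev_le_one {φ : (Fin 3 → ℂ) → ℂ} (hφ : Continuous φ) {p : Fin 3 → ℂ} (hp : φ p = 0) :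
    ∀ᶠ z in 𝓝 p, ‖φ z‖ₑ ≤ 1 := by
  have : ContinuousAt (fun z => ‖φ z‖ₑ) p := hφ.enorm.continuousAt
  exact (this.eventually (gt_mem_nhds (show ‖φ p‖ₑ < 1 by simp [hp]))).mono fun z hz => hz.le

lemma Arr.LI_quad (A : Arr ℓ q) {p : Fin 3 → ℂ} (hp : p ≠ 0) (T : Finset (Option (Fin d)))
    (hT : ∀ o ∈ T, eval p (Qc ℓ q o) = 0) (hc : T.card = 4)
    {o1 o2 : Option (Fin d)} (m1 : o1 ∈ T) (m2 : o2 ∈ T)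
    (t : ℝ) (ht : 0 ≤ t) (ht2 : 3 * t / 2 < 2)
    {F G : (Fin 3 → ℂ) → ℝ≥0∞} {K K' : ℝ≥0∞} (hK : K ≠ ∞) (hK' : K' ≠ ∞)
    (hF : ∀ᶠ z in 𝓝 p, F z ≤ K * (‖eval z (Qc ℓ q o1)‖ₑ + ‖eval z (Qc ℓ q o2)‖ₑ))
    (hG : ∀ᶠ z in 𝓝 p, G z ≤ K' * (‖eval z (Qc ℓ q o1)‖ₑ + ‖eval z (Qc ℓ q o2)‖ₑ)) :
    LI (fun z => F z * G z * ∏ o ∈ T, (‖eval z (Qc ℓ q o)‖ₑ⁻¹) ^ t) p := by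
  have L : ∀ o ∈ T, LI (fun z => ∏ o ∈ T.erase o, (‖eval z (Qc ℓ q o)‖ₑ⁻¹) ^ t) p := by
    intro o ho
    refine A.LIc hp _ (fun o' ho' => hT o' (Finset.mem_of_mem_erase ho')) t (3 * t / 2) ht
      (by linarith) ht2 3 (by rw [Finset.card_erase_of_mem ho, hc]) (by push_cast; linarith)
  have hm : ∀ S : Finset (Option (Fin d)),
      Measurable fun z : Fin 3 → ℂ => ∏ o ∈ S, (‖eval z (Qc ℓ q o)‖ₑ⁻¹) ^ t := fun S =>
    Finset.measurable_fun_prod _ fun o _ => (cont_eval _).measurable.enorm.inv.pow_const t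
  refine (((L o1 m1).add (L o2 m2) (hm _)).const_mul (c := K * K' * 4)
    (ENNReal.mul_ne_top (ENNReal.mul_ne_top hK hK') (by simp))).mono ?_
  filter_upwards [hF, hG, ev_le_one (cont_eval _) (hT o1 m1), ev_le_one (cont_eval _) (hT o2 m2)]
    with z h1 h2 h3 h4
  have s : ∀ o ∈ T, ‖eval z (Qc ℓ q o)‖ₑ ≤ 1 → ‖eval z (Qc ℓ q o)‖ₑ ^ 2 *
      ∏ o ∈ T, (‖eval z (Qc ℓ q o)‖ₑ⁻¹) ^ t ≤ ∏ o ∈ T.erase o, (‖eval z (Qc ℓ q o)‖ₑ⁻¹) ^ t := by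
    intro o ho h
    rw [← Finset.mul_prod_erase T _ ho, ← mul_assoc]
    exact mul_le_of_le_one_left' (sq_rpow_le h ht (by linarith))
  have s1 := s o1 m1 h3
  have s2 := s o2 m2 h4
  set x := ‖eval z (Qc ℓ q o1)‖ₑ
  set y := ‖eval z (Qc ℓ q o2)‖ₑ
  set W := ∏ o ∈ T, (‖eval z (Qc ℓ q o)‖ₑ⁻¹) ^ t
  calc F z * G z * W ≤ (K * (x + y)) * (K' * (x + y)) * W := by gcongr
    _ = K * K' * ((x + y) * (x + y)) * W := by ring
    _ ≤ K * K' * (4 * (x ^ 2 + y ^ 2)) * W := by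
        have := sq_add_le x y
        gcongr (_ * ?_) * _
    _ = K * K' * 4 * (x ^ 2 * W + y ^ 2 * W) := by ring
    _ ≤ _ := by gcongr

end

end CL

namespace CL

open MeasureTheory Topology ENNReal NNReal ComplexConjugate

section
variable {d : ℕ} {ℓ : Fin d → MvPolynomial (Fin 3) ℂ} {q : MvPolynomial (Fin 3) ℂ}

lemma Arr.f_hom (A : Arr ℓ q) : (q * ∏ i, ℓ i).IsHomogeneous (d + 2) := by
  have h := A.qhom.mul (IsHomogeneous.prod univ ℓ (fun _ => 1) fun i _ => A.hom i)
  convert h using 1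
  simp [add_comm]

lemma cont_TT (a : Fin 3 → MvPolynomial (Fin 3) ℂ) : Continuous (TT a) :=
  (contDiff_TT a (n := 0)).continuous

lemma Arr.div_zero (A : Arr ℓ q) (a : Fin 3 → MvPolynomial (Fin 3) ℂ) (r : ℕ)
    (ha : ∀ i, (a i).IsHomogeneous r) (h : theta a (q * ∏ i, ℓ i) = 0) (hr : 2 * r + 3 ≤ d) :
    ∑ i, pderiv i (a i) = 0 := by
  have hr' : (2 * r + 3 : ℝ) ≤ d := by exact_mod_cast hr
  have hD : (0 : ℝ) < d + 2 := by positivity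
  have hs : ((r + 2 : ℝ) / (d + 2)) * ((d + 2 : ℕ) : ℝ) = r + 2 := by
    push_cast; exact div_mul_cancel₀ _ hD.ne'
  have ht : 2 * ((r + 2 : ℝ) / (d + 2)) < 1 := by
    rw [← mul_div_assoc, div_lt_one hD]; linarith
  have ht0 : 0 ≤ 2 * ((r + 2 : ℝ) / (d + 2)) := by positivity
  refine main_analytic (q * ∏ i, ℓ i) a (d + 2) r (by omega) A.f_hom ha h _ hs fun p hp => ?_
  generalize 2 * ((r + 2 : ℝ) / (d + 2)) = t at ht ht0
  rw [Qc_prod]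
  refine LI_reduce (Qc ℓ q) p t ht0 _ ?_
  refine LI.EB_mul ((EB.enorm (cont_eval _) p).mul (EB.enorm (cont_TT a) p)) ?_
  exact A.LIc hp _ (fun o ho => by simpa using ho) t (2 * t) ht0 (by linarith) (by linarith) 4
    (A.card_le hp) (by push_cast; linarith)

lemma Arr.vanish_TT (A : Arr ℓ q) {p : Fin 3 → ℂ} (hp : p ≠ 0) {i1 i2 : Fin d} (h12 : i1 ≠ i2)
    (p1 : eval p (ℓ i1) = 0) (p2 : eval p (ℓ i2) = 0) {a : Fin 3 → MvPolynomial (Fin 3) ℂ} {r : ℕ}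
    (ha : ∀ i, (a i).IsHomogeneous r) (h0 : ∀ i, eval p (a i) = 0) :
    ∃ b c : (Fin 3 → ℂ) → ℂ, Continuous b ∧ Continuous c ∧
      ∀ z, TT a z = eval z (ℓ i1) * b z + eval z (ℓ i2) * c z := by
  choose b c hb hc h using fun k => A.vanish hp h12 p1 p2 (ha k) (h0 k)
  refine ⟨fun z => ∑ k, b k z * conj (z k), fun z => ∑ k, c k z * conj (z k),
    continuous_finsetSum _ fun k _ => (hb k).mul (Complex.continuous_conj.comp (continuous_apply k)),
    continuous_finsetSum _ fun k _ => (hc k).mul (Complex.continuous_conj.comp (continuous_apply k)),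
    fun z => ?_⟩
  simp only [TT, h, Fin.sum_univ_three]
  ring

lemma Arr.lower (A : Arr ℓ q) (a : Fin 3 → MvPolynomial (Fin 3) ℂ) (r : ℕ)
    (ha : ∀ i, (a i).IsHomogeneous r) (h : theta a (q * ∏ i, ℓ i) = 0) (hr : 2 * r + 3 ≤ d) :
    ∀ j, a j = 0 := by
  have hdiv := A.div_zero a r ha h hr
  intro j
  have hr' : (2 * r + 3 : ℝ) ≤ d := by exact_mod_cast hr
  have hD : (0 : ℝ) < d + 2 := by positivity
  have hs : (((r + 1 : ℕ) + 2 : ℝ) / (d + 2)) * ((d + 2 : ℕ) : ℝ) = (r + 1 : ℕ) + 2 := by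
    push_cast; exact div_mul_cancel₀ _ hD.ne'
  have ht : 2 * (((r + 1 : ℕ) + 2 : ℝ) / (d + 2)) ≤ 6 / 5 := by
    rw [← mul_div_assoc, div_le_iff₀ hD]; push_cast
    have : (0:ℝ) ≤ r := by positivity
    linarith
  have ht0 : 0 ≤ 2 * (((r + 1 : ℕ) + 2 : ℝ) / (d + 2)) := by positivity
  have hb : ∀ i, (X j * a i).IsHomogeneous (r + 1) := fun i => by
    rw [add_comm]; exact (isHomogeneous_X ℂ j).mul (ha i)
  have hsyz : ∑ i, (X j * a i) * pderiv i (q * ∏ i, ℓ i) = 0 := by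
    have : ∑ i, (X j * a i) * pderiv i (q * ∏ i, ℓ i) = X j * theta a (q * ∏ i, ℓ i) := by
      rw [theta, Finset.mul_sum]
      exact Finset.sum_congr rfl fun i _ => by ring
    rw [this, h, mul_zero]
  have hdb : ∑ i, pderiv i (X j * a i) = a j := by
    simp only [Derivation.leibniz, smul_eq_mul, Finset.sum_add_distrib, ← Finset.mul_sum, hdiv,
      pderiv_X, mul_zero, zero_add]
    rw [Finset.sum_eq_single j]
    · simp
    · intro i _ hij
      simp [Pi.single_eq_of_ne' hij]
    · simp
  have hTT : ∀ z, TT (fun i => X j * a i) z = z j * TT a z := by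
    intro z
    simp only [TT, map_mul, eval_X, Finset.mul_sum]
    exact Finset.sum_congr rfl fun i _ => by ring
  rw [← hdb]
  refine main_analytic (q * ∏ i, ℓ i) _ (d + 2) (r + 1) (by omega) A.f_hom hb hsyz _ hs fun p hp => ?_
  generalize 2 * (((r + 1 : ℕ) + 2 : ℝ) / (d + 2)) = t at ht ht0
  rw [Qc_prod, hdb]
  refine LI_reduce (Qc ℓ q) p t ht0 _ ?_
  by_cases hcard : (univ.filter (fun o => eval p (Qc ℓ q o) = 0)).card = 4
  · have hcard' := hcard
    rw [Qc_card] at hcard'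
    obtain ⟨i1, i2, i3, h12, h13, h23, p1, p2, p3⟩ := three_lines ℓ q p hcard'
    have hz := A.eigen a r ha h hdiv hr p hp hcard' i1 i2 i3 h12 h13 h23 p1 p2 p3
    obtain ⟨b, c, hb, hc, h1⟩ := A.vanish hp h12 p1 p2 (ha j) (hz j)
    obtain ⟨b', c', hb', hc', h2⟩ := A.vanish_TT hp h12 p1 p2 ha hz
    obtain ⟨K, hK, e1⟩ := bound_two (u := fun z => eval z (ℓ i1)) (v := fun z => eval z (ℓ i2))
      hb hc p
    have hj : Continuous fun z : Fin 3 → ℂ => z j := continuous_apply j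
    obtain ⟨K', hK', e2⟩ := bound_two (u := fun z => eval z (ℓ i1)) (v := fun z => eval z (ℓ i2))
      (hj.mul hb') (hj.mul hc') p
    refine A.LI_quad hp _ (fun o ho => by simpa using ho) hcard (o1 := some i1) (o2 := some i2)
      (Finset.mem_filter.2 ⟨Finset.mem_univ _, p1⟩) (Finset.mem_filter.2 ⟨Finset.mem_univ _, p2⟩) t ht0 (by linarith) hK hK' ?_ ?_
    · filter_upwards [e1] with z hz
      rw [h1 z]; exact hz
    · filter_upwards [e2] with z hz
      rw [hTT, h2 z]
      refine le_trans (le_of_eq ?_) hz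
      congr 1
      simp only [Pi.mul_apply]
      ring
  · refine LI.EB_mul ((EB.enorm (cont_eval _) p).mul (EB.enorm (cont_TT _) p)) ?_
    have := A.card_le hp
    exact A.LIc hp _ (fun o ho => by simpa using ho) t (3 * t / 2) ht0 (by linarith) (by linarith) 3
      (by omega) (by push_cast; linarith)

end

end CL

namespace CL

lemma exists_nzd (J : Ideal (MvPolynomial (Fin 3) ℂ))
    (hJ : ∀ g, (∀ i : Fin 3, X i * g ∈ J) → g ∈ J) :
    ∃ c : Fin 3 → ℂ, c 2 ≠ 0 ∧ ∀ g, (∑ i, C (c i) * X i) * g ∈ J → g ∈ J := by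
  let M := MvPolynomial (Fin 3) ℂ ⧸ J
  let Φ : (Fin 3 → ℂ) →ₗ[ℂ] MvPolynomial (Fin 3) ℂ :=
    { toFun := fun c => ∑ i, C (c i) * X i
      map_add' := fun x y => by simp [add_mul, Finset.sum_add_distrib]
      map_smul' := fun m x => by simp [Finset.smul_sum, MvPolynomial.smul_eq_C_mul, mul_assoc] }
  have hfin := associatedPrimes.finite (MvPolynomial (Fin 3) ℂ) M
  let V : Ideal (MvPolynomial (Fin 3) ℂ) → Submodule ℂ (Fin 3 → ℂ) := fun P =>
    (P.restrictScalars ℂ).comap Φ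
  let s : Finset (Submodule ℂ (Fin 3 → ℂ)) :=
    insert (LinearMap.ker (LinearMap.proj (R := ℂ) (φ := fun _ : Fin 3 => ℂ) 2))
      (hfin.toFinset.image V)
  have hs : ⊤ ∉ s := by
    intro h
    rcases Finset.mem_insert.1 h with h | h
    · have : (Pi.single 2 1 : Fin 3 → ℂ) ∈ (⊤ : Submodule ℂ (Fin 3 → ℂ)) := trivial
      rw [h] at this
      simp at this
    · obtain ⟨P, hP, hV⟩ := Finset.mem_image.1 h
      rw [Set.Finite.mem_toFinset, AssociatedPrimes.mem_iff, isAssociatedPrime_iff] at hP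
      obtain ⟨hprime, x, hx⟩ := hP
      obtain ⟨g, rfl⟩ := Ideal.Quotient.mk_surjective x
      have hX : ∀ i, X i * g ∈ J := by
        intro i
        have h1 : (Pi.single i 1 : Fin 3 → ℂ) ∈ V P := by rw [hV]; trivial
        have h2 : Φ (Pi.single i 1) ∈ P := h1
        have h3 : Φ (Pi.single i 1) = X i := by
          simp [Φ, Pi.single_apply, ite_mul]
        rw [h3, hx, Submodule.mem_colon_singleton, Submodule.mem_bot] at h2
        exact Ideal.Quotient.eq_zero_iff_mem.1 h2
      apply hprime.ne_top
      rw [hx, Ideal.eq_top_iff_one, Submodule.mem_colon_singleton, one_smul, Submodule.mem_bot,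
        Ideal.Quotient.eq_zero_iff_mem]
      exact hJ g hX
  have hne := Subspace.biUnion_ne_univ_of_top_notMem hs
  obtain ⟨c, hc⟩ := (Set.ne_univ_iff_exists_notMem _).1 hne
  simp only [Set.mem_iUnion, not_exists] at hc
  refine ⟨c, fun h0 => hc _ (Finset.mem_insert_self _ _) (by simpa using h0), fun g hg => ?_⟩
  by_contra hgJ
  have hz : Φ c ∈ { r : MvPolynomial (Fin 3) ℂ | ∃ x : M, x ≠ 0 ∧ r • x = 0 } := by
    refine ⟨Ideal.Quotient.mk J g, fun h => hgJ (Ideal.Quotient.eq_zero_iff_mem.1 h), ?_⟩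
    exact Ideal.Quotient.eq_zero_iff_mem.2 hg
  rw [← biUnion_associatedPrimes_eq_zero_divisors] at hz
  simp only [Set.mem_iUnion] at hz
  obtain ⟨P, hP, hPc⟩ := hz
  exact hc (V P) (Finset.mem_insert_of_mem (Finset.mem_image_of_mem _
    (hfin.mem_toFinset.2 hP))) hPc

lemma homComp_mul {p : MvPolynomial (Fin 3) ℂ} {m : ℕ} (hp : p.IsHomogeneous m) (k : ℕ)
    (b : MvPolynomial (Fin 3) ℂ) :
    homogeneousComponent (k + m) (b * p) = homogeneousComponent k b * p := by
  conv_lhs => rw [← sum_homogeneousComponent b, Finset.sum_mul, map_sum]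
  have h : ∀ i, homogeneousComponent (k + m) (homogeneousComponent i b * p) =
      if i = k then homogeneousComponent k b * p else 0 := by
    intro i
    have h1 : (homogeneousComponent i b * p) ∈ homogeneousSubmodule (Fin 3) ℂ (i + m) :=
      (homogeneousComponent_isHomogeneous i b).mul hp
    rw [homogeneousComponent_of_mem h1]
    by_cases hi : i = k
    · simp [hi]
    · rw [if_neg (by omega), if_neg hi]
  simp only [h, Finset.sum_ite_eq']
  split_ifs with hk
  · rfl
  · rw [homogeneousComponent_eq_zero, zero_mul]
    simpa using hk

/-- restriction to the line `α X₀ + β X₁ + X₂ = 0` in an affine chart -/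
noncomputable def psi (α β : ℂ) : MvPolynomial (Fin 3) ℂ →ₐ[ℂ] Polynomial ℂ :=
  aeval ![Polynomial.X, 1, -(Polynomial.C α * Polynomial.X) - Polynomial.C β]

lemma psi_natDegree (α β : ℂ) {P : MvPolynomial (Fin 3) ℂ} {n : ℕ} (hP : P.IsHomogeneous n) :
    (psi α β P).natDegree ≤ n := by
  have := MvPolynomial.aeval_natDegree_le P hP.totalDegree_le
    ![Polynomial.X, 1, -(Polynomial.C α * Polynomial.X) - Polynomial.C β] (n := 1) (by
      intro i
      fin_cases i
      · simp
      · simp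
      · simp only [Fin.reduceFinMk, Matrix.cons_val]
        compute_degree)
  simpa [psi] using this

lemma psi_eval (α β x : ℂ) (P : MvPolynomial (Fin 3) ℂ) :
    (psi α β P).eval x = eval ![x, 1, -(α * x) - β] P := by
  induction P using MvPolynomial.induction_on with
  | C c => simp [psi]
  | add P Q hP hQ => simp [hP, hQ]
  | mul_X P j hP =>
    rw [map_mul, Polynomial.eval_mul, hP, map_mul, eval_X]
    congr 1
    fin_cases j <;> simp [psi]

/-- substitution -/
noncomputable def sig (α β : ℂ) : MvPolynomial (Fin 3) ℂ →ₐ[ℂ] MvPolynomial (Fin 3) ℂ :=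
  aeval ![X 0, X 1, -(C α * X 0) - C β * X 1]

lemma sig_eval (α β : ℂ) (z : Fin 3 → ℂ) (P : MvPolynomial (Fin 3) ℂ) :
    eval z (sig α β P) = eval ![z 0, z 1, -(α * z 0) - β * z 1] P := by
  induction P using MvPolynomial.induction_on with
  | C c => simp [sig]
  | add P Q hP hQ => simp [hP, hQ]
  | mul_X P j hP =>
    rw [map_mul, map_mul, hP, map_mul, eval_X]
    congr 1
    fin_cases j <;> simp [sig]

lemma sig_dvd (α β : ℂ) (P : MvPolynomial (Fin 3) ℂ) :
    (C α * X 0 + C β * X 1 + X 2) ∣ P - sig α β P := by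
  induction P using MvPolynomial.induction_on with
  | C c => simp [sig]
  | add P Q hP hQ =>
    rw [map_add, add_sub_add_comm]
    exact dvd_add hP hQ
  | mul_X P j hP =>
    obtain ⟨k, hk⟩ := hP
    have hX : ∃ m, X j - sig α β (X j) = (C α * X 0 + C β * X 1 + X 2) * m := by
      obtain rfl | rfl | rfl : j = 0 ∨ j = 1 ∨ j = 2 := by fin_cases j <;> simp
      · exact ⟨0, by simp [sig]⟩
      · exact ⟨0, by simp [sig]⟩
      · exact ⟨1, by simp [sig]; ring⟩
    obtain ⟨m, hm⟩ := hX
    refine ⟨k * X j + sig α β P * m, ?_⟩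
    rw [map_mul]
    linear_combination X j * hk + sig α β P * hm

lemma psi_zero (α β : ℂ) {P : MvPolynomial (Fin 3) ℂ} {n : ℕ} (hP : P.IsHomogeneous n)
    (h : psi α β P = 0) : (C α * X 0 + C β * X 1 + X 2) ∣ P := by
  have h0 : X 1 * sig α β P = 0 := by
    apply MvPolynomial.funext
    intro z
    rw [map_mul, eval_X, sig_eval, map_zero]
    by_cases hz : z 1 = 0
    · simp [hz]
    · have h1 := psi_eval α β (z 0 / z 1) P
      rw [h, Polynomial.eval_zero] at h1
      have h2 : ![z 0, z 1, -(α * z 0) - β * z 1] =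
          z 1 • ![z 0 / z 1, 1, -(α * (z 0 / z 1)) - β] := by
        ext i
        fin_cases i
        · simp; field_simp
        · simp
        · simp; field_simp
      rw [h2, eval_smul_hom hP, ← h1]
      simp
  have h1 : sig α β P = 0 := by simpa [X_ne_zero] using h0
  have := sig_dvd α β P
  rwa [h1, sub_zero] at this

/-- binary form with given coefficients -/
noncomputable def bin (j : ℕ) (u : Fin (j + 1) → ℂ) : MvPolynomial (Fin 3) ℂ :=
  ∑ k, C (u k) * (X 0 ^ (k : ℕ) * X 1 ^ (j - (k : ℕ)))

lemma bin_hom (j : ℕ) (u : Fin (j + 1) → ℂ) : (bin j u).IsHomogeneous j := by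
  refine IsHomogeneous.sum _ _ _ fun k _ => ?_
  have h := (isHomogeneous_C (Fin 3) (u k)).mul
    (((isHomogeneous_X ℂ (0 : Fin 3)).pow k).mul ((isHomogeneous_X ℂ (1 : Fin 3)).pow (j - k)))
  convert h using 1
  have := k.2
  omega

lemma bin_psi (α β : ℂ) (j : ℕ) (u : Fin (j + 1) → ℂ) (h : psi α β (bin j u) = 0) : u = 0 := by
  ext k
  have h1 := congrArg (fun P => Polynomial.coeff P (k : ℕ)) h
  simp only [bin, map_sum, map_mul, map_pow, Polynomial.finsetSum_coeff, Polynomial.coeff_zero] at h1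
  rw [Finset.sum_eq_single k] at h1
  · simpa [psi] using h1
  · intro b _ hb
    have : (k : ℕ) ≠ b := fun h => hb (Fin.ext h.symm)
    simp [psi, Polynomial.coeff_X_pow, this]
  · simp

lemma upper (f : MvPolynomial (Fin 3) ℂ) (D j : ℕ) (hf : f.IsHomogeneous (D + 1)) (hj : 1 ≤ j)
    (hDj : D < 2 * j + 2)
    (hfree : ∀ g : MvPolynomial (Fin 3) ℂ,
      (∀ i : Fin 3, X i * g ∈ Ideal.span {pderiv 0 f, pderiv 1 f, pderiv 2 f}) →
        g ∈ Ideal.span {pderiv 0 f, pderiv 1 f, pderiv 2 f}) :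
    ∃ a b c : MvPolynomial (Fin 3) ℂ,
    a.IsHomogeneous j ∧ b.IsHomogeneous j ∧ c.IsHomogeneous j ∧
    ¬(a = 0 ∧ b = 0 ∧ c = 0) ∧
    a * pderiv 0 f + b * pderiv 1 f + c * pderiv 2 f = 0 := by
  obtain ⟨c, hc2, hc⟩ := exists_nzd _ hfree
  set α := c 0 / c 2 with hα
  set β := c 1 / c 2 with hβ
  have hh : ∑ i, C (c i) * X i = C (c 2) * (C α * X 0 + C β * X 1 + X 2 : MvPolynomial (Fin 3) ℂ) := by
    rw [Fin.sum_univ_three, mul_add, mul_add, ← mul_assoc, ← mul_assoc, ← C_mul, ← C_mul, hα, hβ,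
      mul_div_cancel₀ _ hc2, mul_div_cancel₀ _ hc2]
  have hfi : ∀ i, (pderiv i f).IsHomogeneous D := fun i => hf.pderiv
  let S : (Fin 3 → Fin (j + 1) → ℂ) → MvPolynomial (Fin 3) ℂ := fun u =>
    ∑ i, bin j (u i) * pderiv i f
  let L : (Fin 3 → Fin (j + 1) → ℂ) →ₗ[ℂ] (Fin (j + D + 1) → ℂ) :=
    { toFun := fun u k => (psi α β (S u)).coeff k
      map_add' := fun u v => by
        ext k
        simp [S, bin, add_mul, Finset.sum_add_distrib]
      map_smul' := fun m u => by
        ext k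
        simp only [S, bin, RingHom.id_apply, Pi.smul_apply, smul_eq_mul, C_mul, mul_assoc,
          ← Finset.mul_sum]
        simp [psi] }
  have hker : LinearMap.ker L ≠ ⊥ := by
    apply LinearMap.ker_ne_bot_of_finrank_lt
    simp only [Module.finrank_pi_fintype, Module.finrank_self, Finset.sum_const, Finset.card_univ,
      Fintype.card_fin, smul_eq_mul]
    omega
  obtain ⟨u, hu, hu0⟩ := (Submodule.ne_bot_iff _).1 hker
  have hS : (S u).IsHomogeneous (j + D) :=
    IsHomogeneous.sum _ _ _ fun i _ => (bin_hom j (u i)).mul (hfi i)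
  have hpsi : psi α β (S u) = 0 := by
    ext k
    rw [Polynomial.coeff_zero]
    by_cases hk : k < j + D + 1
    · exact congrFun (LinearMap.mem_ker.1 hu) ⟨k, hk⟩
    · exact Polynomial.coeff_eq_zero_of_natDegree_lt
        (lt_of_le_of_lt (psi_natDegree α β hS) (by omega))
  obtain ⟨g, hg⟩ := psi_zero α β hS hpsi
  have hSJ : S u ∈ Ideal.span {pderiv 0 f, pderiv 1 f, pderiv 2 f} := by
    simp only [S, Fin.sum_univ_three]
    refine Ideal.add_mem _ (Ideal.add_mem _ ?_ ?_) ?_ <;>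
      exact Ideal.mul_mem_left _ _ (Ideal.subset_span (by simp))
  have hgJ := hc g (by
    rw [hh, mul_assoc, ← hg]
    exact Ideal.mul_mem_left _ _ hSJ)
  obtain ⟨b0, b1, b2, hb⟩ := Submodule.mem_span_triple.1 hgJ
  simp only [smul_eq_mul] at hb
  set h := (C α * X 0 + C β * X 1 + X 2 : MvPolynomial (Fin 3) ℂ) with hdef
  have hhom : h.IsHomogeneous 1 := by
    have h1 := (isHomogeneous_C (Fin 3) α).mul (isHomogeneous_X ℂ (0 : Fin 3))
    have h2 := (isHomogeneous_C (Fin 3) β).mul (isHomogeneous_X ℂ (1 : Fin 3))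
    exact (h1.add h2).add (isHomogeneous_X ℂ (2 : Fin 3))
  have hψh : psi α β h = 0 := by
    simp [psi, hdef]
  have hz : ∀ (v : Fin (j + 1) → ℂ) (b : MvPolynomial (Fin 3) ℂ),
      homogeneousComponent j (bin j v - b * h) = 0 → v = 0 := by
    intro v b h0
    obtain ⟨k, rfl⟩ : ∃ k, j = k + 1 := ⟨j - 1, by omega⟩
    rw [map_sub, homComp_mul hhom, homogeneousComponent_of_mem (bin_hom (k + 1) v), if_pos rfl] at h0
    apply bin_psi α β
    rw [sub_eq_zero.1 h0, map_mul, hψh, mul_zero]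
  refine ⟨homogeneousComponent j (bin j (u 0) - b0 * h), homogeneousComponent j (bin j (u 1) - b1 * h),
    homogeneousComponent j (bin j (u 2) - b2 * h), homogeneousComponent_isHomogeneous _ _,
    homogeneousComponent_isHomogeneous _ _, homogeneousComponent_isHomogeneous _ _, ?_, ?_⟩
  · rintro ⟨h0, h1, h2⟩
    apply hu0
    ext i : 1
    obtain rfl | rfl | rfl : i = 0 ∨ i = 1 ∨ i = 2 := by fin_cases i <;> simp
    · exact hz _ _ h0
    · exact hz _ _ h1
    · exact hz _ _ h2
  · rw [← homComp_mul (hfi 0), ← homComp_mul (hfi 1), ← homComp_mul (hfi 2), ← map_add, ← map_add]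
    have : (bin j (u 0) - b0 * h) * pderiv 0 f + (bin j (u 1) - b1 * h) * pderiv 1 f +
        (bin j (u 2) - b2 * h) * pderiv 2 f = 0 := by
      have hg' : bin j (u 0) * pderiv 0 f + bin j (u 1) * pderiv 1 f + bin j (u 2) * pderiv 2 f
          = h * g := by
        rw [← hg]; simp only [S, Fin.sum_univ_three]
      linear_combination hg' - h * hb
    rw [this, map_zero]

end CL

/-- If `f` defines a free arrangement of `d ≥ 3` pairwise distinct lines and one smooth conic
in `ℙ²(ℂ)` all of whose singularities are ordinary of multiplicity `< 5` (at every point of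
the curve at most 4 of the components pass, and the conic meets each line through a common
point transversally), then `mdr f ∈ {⌈(d-2)/2⌉, ⌊(d+1)/2⌋}`. -/
theorem mdr_of_free_conic_line (d : ℕ) (hd : 3 ≤ d)
    (ℓ : Fin d → MvPolynomial (Fin 3) ℂ)
    (hℓhom : ∀ i, (ℓ i).IsHomogeneous 1)
    (hℓne : ∀ i, ℓ i ≠ 0)
    (hℓprop : ∀ i j, i ≠ j → ∀ c : ℂ, ℓ i ≠ c • ℓ j)
    (q : MvPolynomial (Fin 3) ℂ) (hqhom : q.IsHomogeneous 2)
    -- smoothness of the conic: the gradient of `q` vanishes only at the origin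
    (hqsmooth : ∀ p : Fin 3 → ℂ, (∀ i : Fin 3, eval p (pderiv i q) = 0) → p = 0)
    (f : MvPolynomial (Fin 3) ℂ) (hf : f = q * ∏ i, ℓ i)
    -- every point of the curve lies on at most 4 of the components
    (hmult : ∀ p : Fin 3 → ℂ, p ≠ 0 → eval p f = 0 →
      ((univ.filter (fun i => eval p (ℓ i) = 0)).card
        + (if eval p q = 0 then 1 else 0)) ≤ 4)
    -- the singularities are ordinary: no line is tangent to the conic at a common point
    (htrans : ∀ p : Fin 3 → ℂ, p ≠ 0 → eval p q = 0 →
      ∀ i, eval p (ℓ i) = 0 →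
        ∀ c : ℂ, ℓ i ≠ c • (∑ j : Fin 3, C (eval p (pderiv j q)) * X j))
    -- freeness: the Jacobian ideal is saturated with respect to ⟨x,y,z⟩
    (hfree : ∀ g : MvPolynomial (Fin 3) ℂ,
      (∀ i : Fin 3, X i * g ∈ jacobianIdeal f) → g ∈ jacobianIdeal f) :
    mdr f = (d - 1) / 2 ∨ mdr f = (d + 1) / 2 := by
  have A : CL.Arr ℓ q := ⟨hℓhom, hℓne, hℓprop, hqhom, hqsmooth, by rw [← hf]; exact hmult, htrans⟩
  have hfh : f.IsHomogeneous (d + 1 + 1) := by rw [hf]; exact A.f_hom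
  have hup := CL.upper f (d + 1) ((d + 1) / 2) hfh (by omega) (by omega) hfree
  have hle : mdr f ≤ (d + 1) / 2 := Nat.sInf_le hup
  have hmem : mdr f ∈ {r : ℕ | ∃ a b c : MvPolynomial (Fin 3) ℂ,
    a.IsHomogeneous r ∧ b.IsHomogeneous r ∧ c.IsHomogeneous r ∧
    ¬(a = 0 ∧ b = 0 ∧ c = 0) ∧
    a * pderiv 0 f + b * pderiv 1 f + c * pderiv 2 f = 0} := Nat.sInf_mem ⟨_, hup⟩
  obtain ⟨a, b, c, ha, hb, hc, hne, hsyz⟩ := hmem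
  have hge : ¬ 2 * mdr f + 3 ≤ d := by
    intro hr
    have hz := A.lower ![a, b, c] (mdr f)
      (by
        intro i
        obtain rfl | rfl | rfl : i = 0 ∨ i = 1 ∨ i = 2 := by fin_cases i <;> simp
        · exact ha
        · exact hb
        · exact hc)
      (by
        rw [← hf, CL.theta, Fin.sum_univ_three]
        exact hsyz) hr
    exact hne ⟨hz 0, hz 1, hz 2⟩
  omega
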